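/- arXiv:2002.02067 — 11 statements merged into one kernel-verified Lean document; each statement's English description precedes it below -/
import Mathlib

section
/- Let n be a positive integer and let σ be a permutation of Fin n. Let T be the 𝔽₂-linear endomorphism of V = (Fin n → 𝔽₂) sending v to v ∘ σ⁻¹, and let W₁ = {v ∈ V : ∑ᵢ v(i) = 0}, which is a T-invariant subspace. Then the characteristic polynomial of the restriction of T to W₁ equals the unique polynomial h ∈ 𝔽₂[X] satisfying (X − 1) · h = ∏_o (X^{|o|} − 1), where the product runs over the orbits o of σ on Fin n and |o| denotes the cardinality of the orbit. -/
open Polynomial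

/-- The orbits of a permutation `σ` of `Fin n`, as a finset of finsets. -/
def permOrbits {n : ℕ} (σ : Equiv.Perm (Fin n)) : Finset (Finset (Fin n)) :=
  Finset.univ.image fun i => Finset.univ.filter fun j => σ.SameCycle i j

/-- The 𝔽₂-linear endomorphism of `Fin n → 𝔽₂` sending `v` to `v ∘ σ⁻¹`. -/
def permT {n : ℕ} (σ : Equiv.Perm (Fin n)) :
    (Fin n → ZMod 2) →ₗ[ZMod 2] (Fin n → ZMod 2) :=
  LinearMap.funLeft (ZMod 2) (ZMod 2) ⇑σ⁻¹

/-- The subspace `W₁` of vectors in `Fin n → 𝔽₂` whose coordinates sum to zero. -/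
def evenWeight (n : ℕ) : Submodule (ZMod 2) (Fin n → ZMod 2) where
  carrier := {v | ∑ i, v i = 0}
  add_mem' := by
    intro a b ha hb
    simp only [Set.mem_setOf_eq, Pi.add_apply, Finset.sum_add_distrib] at *
    rw [ha, hb, add_zero]
  zero_mem' := by simp
  smul_mem' := by
    intro c v hv
    simp only [Set.mem_setOf_eq, Pi.smul_apply, smul_eq_mul, ← Finset.mul_sum] at *
    rw [hv, mul_zero]

/-- `W₁` is invariant under `T`. -/
theorem evenWeight_invariant {n : ℕ} (σ : Equiv.Perm (Fin n)) :
    ∀ v ∈ evenWeight n, permT σ v ∈ evenWeight n := by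
  intro v hv
  have : ∑ i, v (σ⁻¹ i) = ∑ i, v i := Equiv.sum_comp σ⁻¹ v
  simpa only [evenWeight, permT, LinearMap.funLeft_apply, Submodule.mem_mk,
    AddSubmonoid.mem_mk, AddSubsemigroup.mem_mk, Set.mem_setOf_eq, Function.comp,
    this] using hv

open Module.Basis in
theorem aux_charpoly_mul {K V : Type*} [Field K] [AddCommGroup V] [Module K V]
    [Module.Finite K V] (W : Submodule K V) (e : V →ₗ[K] V) (he : W ≤ W.comap e) :
    e.charpoly = (e.restrict he).charpoly * (W.mapQ W e he).charpoly := by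
  let m := Module.Free.ChooseBasisIndex K W
  let bW : Module.Basis m K W := Module.Free.chooseBasis K W
  let n := Module.Free.ChooseBasisIndex K (V ⧸ W)
  let bQ : Module.Basis n K (V ⧸ W) := Module.Free.chooseBasis K (V ⧸ W)
  let b := sumQuot bW bQ
  let A : Matrix m m K := LinearMap.toMatrix bW bW (e.restrict he)
  let B : Matrix m n K := Matrix.of fun i l ↦
    ((sumQuot bW bQ).repr (e ((sumQuot bW bQ) (Sum.inr l)))) (Sum.inl i)
  let D : Matrix n n K := LinearMap.toMatrix bQ bQ (W.mapQ W e he)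
  suffices LinearMap.toMatrix b b e = Matrix.fromBlocks A B 0 D by
    rw [← LinearMap.charpoly_toMatrix e b, this, ← LinearMap.charpoly_toMatrix _ bW,
      ← LinearMap.charpoly_toMatrix _ bQ, Matrix.charpoly_fromBlocks_zero₂₁]
  ext u v
  cases u with
  | inl i =>
    cases v with
    | inl k =>
      simp only [b, sumQuot_inl, Matrix.fromBlocks_apply₁₁, A, LinearMap.toMatrix_apply]
      apply sumQuot_repr_inl_of_mem
    | inr l => simp [b, LinearMap.toMatrix_apply, Matrix.fromBlocks_apply₁₂, B]
  | inr j =>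
    cases v with
    | inl k =>
      suffices W.mkQ (e (bW k)) = 0 by simp [LinearMap.toMatrix_apply, b, this]
      rw [← LinearMap.mem_ker, Submodule.ker_mkQ]
      exact he (Submodule.coe_mem (bW k))
    | inr l =>
      simp only [LinearMap.toMatrix_apply, sumQuot_repr_inr,
        Matrix.fromBlocks_apply₂₂, b, D]
      rw [← sumQuot_inr bW bQ l, W.mapQ_apply]
      simp

theorem aux_finrank_quot (n : ℕ) (hn : 0 < n) :
    Module.finrank (ZMod 2) ((Fin n → ZMod 2) ⧸ evenWeight n) = 1 := by
  let s : (Fin n → ZMod 2) →ₗ[ZMod 2] ZMod 2 := ∑ i, LinearMap.proj i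
  have hs : ∀ v, s v = ∑ i, v i := by intro v; simp [s]
  have hk : LinearMap.ker s = evenWeight n := by
    ext v
    rw [LinearMap.mem_ker, hs]
    rfl
  have hsurj : Function.Surjective s := by
    intro c
    refine ⟨Pi.single ⟨0, hn⟩ c, ?_⟩
    rw [hs]; simp
  rw [← hk, (s.quotKerEquivOfSurjective hsurj).finrank_eq, Module.finrank_self]

theorem aux_mapQ {n : ℕ} (σ : Equiv.Perm (Fin n)) :
    (evenWeight n).mapQ (evenWeight n) (permT σ) (evenWeight_invariant σ) = 1 := by
  apply Submodule.linearMap_qext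
  ext1 v
  apply LinearMap.ext
  intro c
  simp only [LinearMap.comp_apply, Submodule.mkQ_apply, Submodule.mapQ_apply, Module.End.one_apply]
  rw [Submodule.Quotient.eq]
  change ∑ i, _ = (0 : ZMod 2)
  generalize (LinearMap.single (ZMod 2) (fun _ => ZMod 2) v) c = w
  have : ∑ i, w (σ⁻¹ i) = ∑ i, w i := Equiv.sum_comp σ⁻¹ w
  simp only [permT, Pi.sub_apply, LinearMap.funLeft_apply, Finset.sum_sub_distrib, this, sub_self]

theorem aux_aeval {α : Type*} (τ : Equiv.Perm α) (p : (ZMod 2)[X])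
    (v : α → ZMod 2) (i : α) :
    (aeval (LinearMap.funLeft (ZMod 2) (ZMod 2) τ) p : Module.End _ _) v i
      = p.sum fun k c => c * v ((τ ^ k) i) := by
  have hpow : ∀ k : ℕ, ∀ w : α → ZMod 2,
      ((LinearMap.funLeft (ZMod 2) (ZMod 2) τ : Module.End _ _) ^ k) w = w ∘ (τ ^ k : Equiv.Perm α) := by
    intro k
    induction k with
    | zero => intro w; rfl
    | succ k ih =>
      intro w
      rw [pow_succ, Module.End.mul_apply, ih, pow_succ']
      rfl
  rw [aeval_eq_sum_range, Polynomial.sum_over_range _ (by simp)]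
  simp [hpow]

theorem aux_cycle {α : Type*} [Fintype α] [DecidableEq α] (τ : Equiv.Perm α) (a : α)
    (h : ∀ x y, τ.SameCycle x y) :
    (LinearMap.funLeft (ZMod 2) (ZMod 2) τ).charpoly = X ^ Fintype.card α - 1 := by
  have hpos : 0 < Fintype.card α := Fintype.card_pos_iff.2 ⟨a⟩
  have hc : τ.IsCycleOn ((Finset.univ : Finset α) : Set α) := by
    refine ⟨?_, fun x _ y _ => h x y⟩
    simpa using! τ.bijective
  set T := LinearMap.funLeft (ZMod 2) (ZMod 2) τ with hT
  have hdq : (X ^ Fintype.card α - 1 : (ZMod 2)[X]).degree = Fintype.card α := by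
    simpa using degree_X_pow_sub_C hpos (1 : ZMod 2)
  have hmq : (X ^ Fintype.card α - 1 : (ZMod 2)[X]).Monic := by
    simpa using monic_X_pow_sub_C (1 : ZMod 2) hpos.ne'
  have hdp : T.charpoly.degree = Fintype.card α := by
    rw [degree_eq_natDegree T.charpoly_monic.ne_zero, LinearMap.charpoly_natDegree]
    simp
  have hq : aeval T (X ^ Fintype.card α - 1 : (ZMod 2)[X]) = 0 := by
    have h1 : τ ^ Fintype.card α = 1 := by
      ext x
      exact hc.pow_card_apply (Finset.mem_univ x)
    have hXX : (aeval T (X ^ Fintype.card α : (ZMod 2)[X]) : Module.End _ _) = 1 := by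
      apply LinearMap.ext
      intro v
      ext i
      rw [hT, aux_aeval, ← monomial_one_right_eq_X_pow, sum_monomial_index _ _ (by simp), h1]
      simp
    rw [map_sub, hXX, map_one, sub_self]
  set r := T.charpoly - (X ^ Fintype.card α - 1) with hr
  have hdr : r.degree < Fintype.card α := by
    rw [← hdp]
    apply degree_sub_lt (hdp.trans hdq.symm) T.charpoly_monic.ne_zero
    rw [T.charpoly_monic.leadingCoeff, hmq.leadingCoeff]
  have hr0 : aeval T r = 0 := by
    rw [hr, map_sub, hq, LinearMap.aeval_self_charpoly, sub_zero]
  have : r = 0 := by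
    by_contra hne
    apply hne
    ext k
    rw [coeff_zero]
    by_cases hk : k < Fintype.card α
    · have := congrFun (LinearMap.congr_fun hr0 (Pi.single ((τ ^ k) a) 1)) a
      rw [hT, aux_aeval, Polynomial.sum_over_range' _ (by simp) (Fintype.card α)
        ((natDegree_lt_iff_degree_lt hne).2 hdr), Finset.sum_eq_single k] at this
      · simpa using this
      · intro l hl hlk
        rw [Pi.single_eq_of_ne, mul_zero]
        rw [Ne, hc.pow_apply_eq_pow_apply (Finset.mem_univ a)]
        intro hmod
        exact hlk (Nat.ModEq.eq_of_lt_of_lt hmod (Finset.mem_range.1 hl) hk)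
      · intro hk'
        exact absurd (Finset.mem_range.2 hk) hk'
    · apply coeff_eq_zero_of_degree_lt
      exact hdr.trans_le (by exact_mod_cast not_lt.1 hk)
  exact sub_eq_zero.1 this

theorem aux_orb {n : ℕ} (σ : Equiv.Perm (Fin n)) (i j : Fin n) :
    (Finset.univ.filter fun k => σ.SameCycle i k) = (Finset.univ.filter fun k => σ.SameCycle j k)
      ↔ σ.SameCycle i j := by
  constructor
  · intro h
    have : j ∈ (Finset.univ.filter fun k => σ.SameCycle i k) := by
      rw [h]; simp [Equiv.Perm.SameCycle.refl]
    simpa using this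
  · intro h
    ext k
    simp only [Finset.mem_filter, Finset.mem_univ, true_and]
    exact ⟨fun h' => h.symm.trans h', fun h' => h.trans h'⟩

theorem aux_perm {n : ℕ} (σ : Equiv.Perm (Fin n)) :
    (permT σ).charpoly = ∏ o ∈ permOrbits σ, ((X : (ZMod 2)[X]) ^ o.card - 1) := by
  let orb : Fin n → Finset (Fin n) := fun i => Finset.univ.filter fun j => σ.SameCycle i j
  have horb : ∀ i j, orb i = orb j ↔ σ.SameCycle i j := aux_orb σ
  let e := Fintype.equivFin (Finset (Fin n))
  let b : Fin n → Fin (Fintype.card (Finset (Fin n))) := fun i => e (orb i)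
  have hb : ∀ i j, b i = b j ↔ σ.SameCycle i j := fun i j => by
    rw [← horb]; exact e.injective.eq_iff
  let M := LinearMap.toMatrix' (permT σ)
  have hM : ∀ i j, M i j = if σ⁻¹ i = j then 1 else 0 := by
    intro i j
    simp [M, LinearMap.toMatrix'_apply, permT, LinearMap.funLeft_apply, Pi.single_apply]
  have hMb : M.BlockTriangular b := by
    intro i j hij
    rw [hM, if_neg]
    intro h
    apply hij.ne
    rw [hb, ← h]
    exact (Equiv.Perm.sameCycle_symm_apply_left).2 (Equiv.Perm.SameCycle.refl _ _)
  have h1 : (permT σ).charpoly = M.charpoly := by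
    rw [← LinearMap.charpoly_toMatrix _ (Pi.basisFun (ZMod 2) (Fin n))]
    rfl
  have himg : Finset.univ.image b = (permOrbits σ).image e := by
    rw [permOrbits, Finset.image_image]
    rfl
  rw [h1, hMb.charpoly, himg, Finset.prod_image e.injective.injOn]
  apply Finset.prod_congr rfl
  intro o ho
  obtain ⟨a, -, rfl⟩ := Finset.mem_image.1 ho
  change (M.toSquareBlock b (b a)).charpoly = X ^ (orb a).card - 1
  have hinv : ∀ i, b (σ⁻¹ i) = b a ↔ b i = b a := by
    intro i
    rw [hb, hb]
    exact Equiv.Perm.sameCycle_symm_apply_left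
  let τ : Equiv.Perm {i // b i = b a} := (σ⁻¹).subtypePerm hinv
  have hτ : ∀ x y, τ.SameCycle x y := by
    intro x y
    rw [Equiv.Perm.sameCycle_subtypePerm, Equiv.Perm.sameCycle_inv, ← hb, x.2, y.2]
  have hcard : Fintype.card {i // b i = b a} = (orb a).card := by
    rw [Fintype.card_subtype]
    congr 1
    ext i
    simp only [orb, Finset.mem_filter, Finset.mem_univ, true_and, hb]
    exact Equiv.Perm.sameCycle_comm
  rw [← hcard, ← aux_cycle τ ⟨a, rfl⟩ hτ,
    ← LinearMap.charpoly_toMatrix _ (Pi.basisFun (ZMod 2) {i // b i = b a})]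
  congr 1
  ext i j
  rw [Matrix.toSquareBlock_def, Matrix.of_apply, hM]
  simp [LinearMap.toMatrix_apply, LinearMap.funLeft_apply, Pi.single_apply, τ, Subtype.ext_iff]

/-- The characteristic polynomial of the restriction of `v ↦ v ∘ σ⁻¹` to the subspace of
vectors with coordinate sum zero is the unique `h` with `(X − 1) ⬝ h = ∏_o (X^|o| − 1)`,
the product running over the orbits of `σ` on `Fin n`. -/
theorem charpoly_restrict_evenWeight (n : ℕ) (hn : 0 < n) (σ : Equiv.Perm (Fin n)) :
    ((X : (ZMod 2)[X]) - 1) *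
        ((permT σ).restrict (evenWeight_invariant σ)).charpoly =
      ∏ o ∈ permOrbits σ, ((X : (ZMod 2)[X]) ^ o.card - 1) := by
  have h := aux_charpoly_mul (evenWeight n) (permT σ) (evenWeight_invariant σ)
  rw [aux_mapQ, LinearMap.charpoly_one, aux_finrank_quot n hn, pow_one, aux_perm] at h
  rw [h, mul_comm]
end

section
/- For every multiset D of positive integers with sum 8, the product ∏_{d ∈ D} (X^d − 1) ∈ 𝔽₂[X] is divisible by (X − 1)², and the unique polynomial h ∈ 𝔽₂[X] with (X − 1)² · h = ∏_{d ∈ D} (X^d − 1) satisfies: it is not the case that the coefficient of X⁴ in h is 0 and the coefficient of X³ in h is 1. -/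
open Polynomial

/-- Effect on coefficient sequences of multiplication by `X^d - 1`. -/
def stepCoeff (d : ℕ) (v : ℕ → ZMod 2) (k : ℕ) : ZMod 2 :=
  (if d ≤ k then v (k - d) else 0) - v k

/-- The admissibility condition, read off from the coefficients of the product. -/
def goodCoeff (v : ℕ → ZMod 2) : Bool :=
  !(decide (v 4 + v 2 + v 0 = 0) && decide (v 3 + v 1 = 1))

/-- All ways of using up the remaining sum `r` lead to a good sequence. -/
def okCoeff : ℕ → ℕ → (ℕ → ZMod 2) → Bool
  | 0, _, _ => false
  | fuel + 1, r, v =>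
    if r = 0 then goodCoeff v
    else (List.range r).all fun e => okCoeff fuel (r - (e + 1)) (stepCoeff (e + 1) v)

lemma okCoeff_sound (L : List ℕ) : ∀ (fuel r : ℕ) (Q : (ZMod 2)[X]),
    (∀ d ∈ L, 0 < d) → L.sum = r → okCoeff fuel r Q.coeff = true →
    goodCoeff (Q * (L.map fun d => (X : (ZMod 2)[X]) ^ d - 1).prod).coeff = true := by
  induction L with
  | nil =>
    intro fuel r Q _ hs hok
    cases fuel with
    | zero => simp [okCoeff] at hok
    | succ f =>
      simp only [List.sum_nil] at hs
      subst hs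
      simpa [okCoeff] using hok
  | cons d L ih =>
    intro fuel r Q hp hs hok
    cases fuel with
    | zero => simp [okCoeff] at hok
    | succ f =>
      have hd : 0 < d := hp d (by simp)
      rw [List.sum_cons] at hs
      have hr : r ≠ 0 := by omega
      rw [okCoeff, if_neg hr, List.all_eq_true] at hok
      have h1 := hok (d - 1) (by rw [List.mem_range]; omega)
      rw [Nat.sub_add_cancel hd] at h1
      have h2 : stepCoeff d Q.coeff = (Q * (X ^ d - 1)).coeff := by
        funext k
        rw [mul_sub, mul_one, coeff_sub, coeff_mul_X_pow', stepCoeff]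
      rw [h2] at h1
      have := ih f (r - d) _ (fun e he => hp e (by simp [he])) (by omega) h1
      rwa [List.map_cons, List.prod_cons, ← mul_assoc]

lemma okCoeff_eight : okCoeff 9 8 (fun k => if k = 0 then 1 else 0) = true := by
  decide +kernel

lemma X_sub_one_sq : ((X : (ZMod 2)[X]) - 1) ^ 2 = X ^ 2 + 1 := by
  have h2 : (2 : (ZMod 2)[X]) = 0 := CharTwo.two_eq_zero
  linear_combination (-X) * h2

/-- For every multiset `D` of positive integers with sum `8`, the polynomial
`∏_{d ∈ D} (X^d − 1) ∈ 𝔽₂[X]` is divisible by `(X − 1)²`, and the quotient `h` never has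
coefficient of `X⁴` equal to `0` together with coefficient of `X³` equal to `1`. -/
theorem genus_three_admissible (D : Multiset ℕ) (hpos : ∀ d ∈ D, 0 < d)
    (hsum : D.sum = 8) :
    (((X : (ZMod 2)[X]) - 1) ^ 2 ∣ (D.map fun d => (X : (ZMod 2)[X]) ^ d - 1).prod) ∧
      ∀ h : (ZMod 2)[X],
        ((X : (ZMod 2)[X]) - 1) ^ 2 * h = (D.map fun d => (X : (ZMod 2)[X]) ^ d - 1).prod →
          ¬(h.coeff 4 = 0 ∧ h.coeff 3 = 1) := by
  induction D using Quotient.inductionOn with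
  | h L =>
  simp only [Multiset.quot_mk_to_coe, Multiset.map_coe, Multiset.prod_coe, Multiset.sum_coe,
    Multiset.mem_coe] at *
  constructor
  · match L, hsum with
    | [], hsum => simp at hsum
    | [d], hsum =>
      simp only [List.sum_cons, List.sum_nil, add_zero] at hsum
      subst hsum
      have h2 : (2 : (ZMod 2)[X]) = 0 := CharTwo.two_eq_zero
      rw [X_sub_one_sq]
      refine ⟨X ^ 6 - X ^ 4 + X ^ 2 - 1, ?_⟩
      simp only [List.map_cons, List.map_nil, List.prod_cons, List.prod_nil]
      ring
    | a :: b :: t, hsum =>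
      simp only [List.map_cons, List.prod_cons]
      rw [← mul_assoc, pow_two]
      exact Dvd.dvd.mul_right (mul_dvd_mul (by simpa using sub_dvd_pow_sub_pow (X : (ZMod 2)[X]) 1 a) (by simpa using sub_dvd_pow_sub_pow (X : (ZMod 2)[X]) 1 b)) _
  · rintro h hh ⟨h4, h3⟩
    have key := okCoeff_sound L 9 8 1 hpos hsum (by
      have : (1 : (ZMod 2)[X]).coeff = fun k => if k = 0 then 1 else 0 := by
        funext k; rw [coeff_one]
      rw [this]; exact okCoeff_eight)
    rw [one_mul, ← hh, X_sub_one_sq, mul_comm, mul_add, mul_one] at key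
    simp only [goodCoeff, coeff_add, coeff_mul_X_pow'] at key
    norm_num [h3, h4] at key
    generalize h.coeff 0 = a at key
    generalize h.coeff 1 = b at key
    generalize h.coeff 2 = c at key
    revert a b c
    decide
end

section
/- Fix an integer g ≥ 1 and set n = 2g + 2. The set S = {h ∈ 𝔽₂[X] : there exists a multiset D of positive integers with sum n such that (X − 1)² · h = ∏_{d ∈ D} (X^d − 1) in 𝔽₂[X]} is finite, and its cardinality equals the number of partitions of n into pairwise distinct parts. -/
open Polynomial

/-- The set of admissible Weil polynomials mod 2 for genus `g`: polynomials
`h ∈ 𝔽₂[X]` such that `(X − 1)² ⬝ h = ∏_{d ∈ D} (X^d − 1)` for some multiset `D` of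
positive integers with sum `2g + 2`. -/
def admissibleSet (g : ℕ) : Set (Polynomial (ZMod 2)) :=
  {h | ∃ D : Multiset ℕ, (∀ d ∈ D, 0 < d) ∧ D.sum = 2 * g + 2 ∧
    ((X : (ZMod 2)[X]) - 1) ^ 2 * h = (D.map fun d => (X : (ZMod 2)[X]) ^ d - 1).prod}

/-- Product attached to a multiset. -/
noncomputable def prodPoly (D : Multiset ℕ) : (ZMod 2)[X] :=
  (D.map fun d => (X : (ZMod 2)[X]) ^ d - 1).prod

theorem prodPoly_cons (a : ℕ) (D : Multiset ℕ) :
    prodPoly (a ::ₘ D) = (X ^ a - 1) * prodPoly D := by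
  simp [prodPoly]

theorem prodPoly_add (D E : Multiset ℕ) :
    prodPoly (D + E) = prodPoly D * prodPoly E := by
  simp [prodPoly]

theorem exists_odd_reduce (D : Multiset ℕ) (hD : ∀ d ∈ D, 0 < d) :
    ∃ E : Multiset ℕ, (∀ d ∈ E, Odd d) ∧ E.sum = D.sum ∧ prodPoly E = prodPoly D := by
  induction D using Multiset.induction_on with
  | empty => exact ⟨0, by simp, rfl, rfl⟩
  | cons a D ih =>
    obtain ⟨E, hE, hs, hp⟩ := ih (fun d hd => hD d (Multiset.mem_cons_of_mem hd))
    have ha : 0 < a := hD a (Multiset.mem_cons_self a D)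
    obtain ⟨k, m, hm, rfl⟩ := Nat.exists_eq_two_pow_mul_odd ha.ne'
    refine ⟨Multiset.replicate (2 ^ k) m + E, ?_, ?_, ?_⟩
    · intro d hd
      rcases Multiset.mem_add.1 hd with h | h
      · rw [Multiset.eq_of_mem_replicate h]; exact hm
      · exact hE d h
    · simp [hs]
    · rw [prodPoly_add, prodPoly_cons, hp]
      congr 1
      have := sub_pow_char_pow (p := 2) (n := k) ((X : (ZMod 2)[X]) ^ m) 1
      simp only [prodPoly, Multiset.map_replicate, Multiset.prod_replicate]
      rw [this, one_pow, ← pow_mul, mul_comm m]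

/-- A maximal-order root argument. -/
theorem exists_dvd_of_prodPoly_eq {D E : Multiset ℕ} (h : prodPoly D = prodPoly E)
    {m : ℕ} (hm : Odd m) (hmD : m ∈ D) : ∃ e ∈ E, m ∣ e := by
  have : NeZero (m : AlgebraicClosure (ZMod 2)) := by
    constructor
    intro h0
    rw [CharP.cast_eq_zero_iff _ 2] at h0
    exact (Nat.not_even_iff_odd.2 hm) (even_iff_two_dvd.2 h0)
  obtain ⟨z, hz⟩ := HasEnoughRootsOfUnity.exists_primitiveRoot (AlgebraicClosure (ZMod 2)) m
  have key : ∀ F : Multiset ℕ, aeval z (prodPoly F) = (F.map fun d => z ^ d - 1).prod := by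
    intro F
    simp [prodPoly, map_multiset_prod, Multiset.map_map]
  have h1 : aeval z (prodPoly D) = 0 := by
    rw [key, Multiset.prod_eq_zero_iff, Multiset.mem_map]
    exact ⟨m, hmD, by rw [hz.pow_eq_one, sub_self]⟩
  rw [h, key, Multiset.prod_eq_zero_iff, Multiset.mem_map] at h1
  obtain ⟨e, he, h2⟩ := h1
  exact ⟨e, he, hz.dvd_of_pow_eq_one e (sub_eq_zero.1 h2)⟩

theorem exists_max (D : Multiset ℕ) (hD : D ≠ 0) : ∃ m ∈ D, ∀ d ∈ D, d ≤ m := by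
  have hne : D.toFinset.Nonempty := by
    rw [Finset.nonempty_iff_ne_empty]
    simpa using hD
  obtain ⟨m, hm, h⟩ := D.toFinset.exists_max_image id hne
  exact ⟨m, by simpa using hm, fun d hd => h d (by simpa using hd)⟩

theorem prodPoly_inj (n : ℕ) : ∀ (D E : Multiset ℕ), D.card = n → (∀ d ∈ D, Odd d) →
    (∀ d ∈ E, Odd d) → prodPoly D = prodPoly E → D = E := by
  induction n with
  | zero =>
    intro D E hn hD hE h
    obtain rfl := Multiset.card_eq_zero.1 hn
    by_contra hne
    obtain ⟨e, he⟩ := Multiset.exists_mem_of_ne_zero (Ne.symm hne)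
    obtain ⟨d, hd, -⟩ := exists_dvd_of_prodPoly_eq h.symm (hE e he) he
    simp at hd
  | succ n ih =>
    intro D E hn hD hE h
    have hD0 : D ≠ 0 := by rintro rfl; simp at hn
    obtain ⟨m, hm, hmax⟩ := exists_max D hD0
    obtain ⟨e, he, hme⟩ := exists_dvd_of_prodPoly_eq h (hD m hm) hm
    have hE0 : E ≠ 0 := by rintro rfl; simp at he
    obtain ⟨f, hf, hfmax⟩ := exists_max E hE0
    obtain ⟨d, hd, hfd⟩ := exists_dvd_of_prodPoly_eq h.symm (hE f hf) hf
    have h1 := Nat.le_of_dvd (hE e he).pos hme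
    have h2 := Nat.le_of_dvd (hD d hd).pos hfd
    have h3 := hmax d hd
    have h4 := hfmax e he
    obtain rfl : m = f := by omega
    obtain ⟨D, rfl⟩ := Multiset.exists_cons_of_mem hm
    obtain ⟨E, rfl⟩ := Multiset.exists_cons_of_mem hf
    congr 1
    apply ih D E (by simpa using hn) (fun d hd => hD d (Multiset.mem_cons_of_mem hd))
      (fun d hd => hE d (Multiset.mem_cons_of_mem hd))
    rw [prodPoly_cons, prodPoly_cons] at h
    exact mul_left_cancel₀ (X_pow_sub_C_ne_zero (hD m hm).pos (1 : ZMod 2)) (by simpa using h)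

theorem even_sum_iff_even_card (E : Multiset ℕ) (hE : ∀ d ∈ E, Odd d) :
    Even E.sum ↔ Even E.card := by
  induction E using Multiset.induction_on with
  | empty => simp
  | cons a E ih =>
    have h1 := ih (fun d hd => hE d (Multiset.mem_cons_of_mem hd))
    have h2 := Nat.not_even_iff_odd.2 (hE a (Multiset.mem_cons_self a E))
    rw [Multiset.sum_cons, Multiset.card_cons, Nat.even_add, Nat.even_add_one, h1]
    tauto

theorem sq_dvd_prodPoly (g : ℕ) (E : Multiset ℕ) (hE : ∀ d ∈ E, Odd d)
    (hs : E.sum = 2 * g + 2) : ((X : (ZMod 2)[X]) - 1) ^ 2 ∣ prodPoly E := by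
  have hc : Even E.card := (even_sum_iff_even_card E hE).1 (by rw [hs]; exact ⟨g + 1, by ring⟩)
  have hne : E ≠ 0 := by rintro rfl; simp at hs
  obtain ⟨a, ha⟩ := Multiset.exists_mem_of_ne_zero hne
  obtain ⟨E, rfl⟩ := Multiset.exists_cons_of_mem ha
  have hne : E ≠ 0 := by rintro rfl; simp at hc
  obtain ⟨b, hb⟩ := Multiset.exists_mem_of_ne_zero hne
  obtain ⟨E, rfl⟩ := Multiset.exists_cons_of_mem hb
  rw [prodPoly_cons, prodPoly_cons, ← mul_assoc, sq]
  exact Dvd.dvd.mul_right (mul_dvd_mul (sub_one_dvd_pow_sub_one _ _) (sub_one_dvd_pow_sub_one _ _)) _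

theorem image_admissibleSet (g : ℕ) :
    (fun h => ((X : (ZMod 2)[X]) - 1) ^ 2 * h) '' admissibleSet g =
      (fun p : Nat.Partition (2 * g + 2) => prodPoly p.parts) ''
        (Nat.Partition.odds (2 * g + 2) : Set (Nat.Partition (2 * g + 2))) := by
  ext f
  constructor
  · rintro ⟨h, ⟨D, hD, hs, hp⟩, rfl⟩
    obtain ⟨E, hE, hEs, hEp⟩ := exists_odd_reduce D hD
    refine ⟨⟨E, fun {d} hd => (hE d hd).pos, hEs.trans hs⟩, ?_, ?_⟩
    · simpa [Nat.Partition.odds, Nat.Partition.restricted] using hE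
    · exact hEp.trans hp.symm
  · rintro ⟨p, hp, rfl⟩
    have hodd : ∀ d ∈ p.parts, Odd d := by
      simpa [Nat.Partition.odds, Nat.Partition.restricted] using hp
    obtain ⟨h, hh⟩ := sq_dvd_prodPoly g p.parts hodd p.parts_sum
    exact ⟨h, ⟨p.parts, fun d hd => p.parts_pos hd, p.parts_sum, hh.symm⟩, hh.symm⟩

/-- The set of admissible Weil polynomials mod 2 for genus `g ≥ 1` is finite, of
cardinality the number of partitions of `2g + 2` into pairwise distinct parts. -/
theorem admissibleSet_finite_card (g : ℕ) (hg : 1 ≤ g) :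
    (admissibleSet g).Finite ∧
      (admissibleSet g).ncard = (Nat.Partition.distincts (2 * g + 2)).card := by
  have hX : ((X : (ZMod 2)[X]) - 1) ^ 2 ≠ 0 :=
    pow_ne_zero _ (by simpa using X_sub_C_ne_zero (1 : ZMod 2))
  have hinj : Function.Injective (fun h => ((X : (ZMod 2)[X]) - 1) ^ 2 * h) :=
    mul_right_injective₀ hX
  have him := image_admissibleSet g
  constructor
  · apply Set.Finite.of_finite_image _ hinj.injOn
    rw [him]
    exact Set.toFinite _
  · rw [← Set.ncard_image_of_injective _ hinj, him, Set.ncard_image_of_injOn,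
      Set.ncard_coe_finset, Nat.Partition.card_odds_eq_card_distincts]
    intro p hp q hq h
    have hp' : ∀ d ∈ p.parts, Odd d := by
      simpa [Nat.Partition.odds, Nat.Partition.restricted] using hp
    have hq' : ∀ d ∈ q.parts, Odd d := by
      simpa [Nat.Partition.odds, Nat.Partition.restricted] using hq
    exact Nat.Partition.ext (prodPoly_inj _ _ _ rfl hp' hq' h)
end

section
/- Let n be a positive integer and let D and D' be multisets of positive integers, each with no repeated elements, such that the sum of D equals n and the sum of D' equals n. If ∏_{d ∈ D} (X^d − 1) = ∏_{d ∈ D'} (X^d − 1) in 𝔽₂[X], then D = D'. -/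
open Polynomial

lemma dpu_two : (2 : (ZMod 2)[X]) = 0 := by
  exact_mod_cast CharP.cast_eq_zero ((ZMod 2)[X]) 2

lemma dpu_aux (k : ℕ) (S : Finset ℕ) (h : ∀ e ∈ S, k ≤ e) :
    (X : (ZMod 2)[X]) ^ k ∣ (∏ e ∈ S, ((X : (ZMod 2)[X]) ^ e - 1)) - 1 := by
  induction S using Finset.induction_on with
  | empty => simp
  | insert a S ha ih =>
    rw [Finset.prod_insert ha]
    obtain ⟨q, hq⟩ := ih (fun e he => h e (Finset.mem_insert_of_mem he))
    have h2 : (X : (ZMod 2)[X]) ^ k ∣ X ^ a := pow_dvd_pow _ (h a (Finset.mem_insert_self _ _))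
    obtain ⟨r, hr⟩ := h2
    refine ⟨r * (∏ e ∈ S, ((X : (ZMod 2)[X]) ^ e - 1)) - q, ?_⟩
    linear_combination (∏ e ∈ S, ((X : (ZMod 2)[X]) ^ e - 1)) * hr - hq - dpu_two

lemma dpu_key (A B : Finset ℕ) (d : ℕ) (hA : d ∈ A) (hB : d ∉ B)
    (h1 : ∀ e ∈ A, d ≤ e) (h2 : ∀ e ∈ B, d ≤ e)
    (h : ∏ e ∈ A, ((X : (ZMod 2)[X]) ^ e - 1) = ∏ e ∈ B, ((X : (ZMod 2)[X]) ^ e - 1)) :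
    False := by
  rw [← Finset.mul_prod_erase A _ hA] at h
  obtain ⟨p, hp⟩ := dpu_aux (d + 1) (A.erase d) (fun e he => by
    have := h1 e (Finset.mem_of_mem_erase he)
    have := Finset.ne_of_mem_erase he
    omega)
  obtain ⟨q, hq⟩ := dpu_aux (d + 1) B (fun e he => by
    have := h2 e he
    have : e ≠ d := fun h => hB (h ▸ he)
    omega)
  have hd : (X : (ZMod 2)[X]) ^ (d + 1) ∣ X ^ d := by
    refine ⟨q - (X ^ d - 1) * p, ?_⟩
    linear_combination h - (X ^ d - 1) * hp + hq + dpu_two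
  rw [X_pow_dvd_iff] at hd
  simpa using hd d (Nat.lt_succ_self d)

lemma dpu_fin (A B : Finset ℕ) (hA : ∀ d ∈ A, 0 < d)
    (h : ∏ e ∈ A, ((X : (ZMod 2)[X]) ^ e - 1) = ∏ e ∈ B, ((X : (ZMod 2)[X]) ^ e - 1)) :
    A = B := by
  have hc : ∏ e ∈ A \ B, ((X : (ZMod 2)[X]) ^ e - 1)
      = ∏ e ∈ B \ A, ((X : (ZMod 2)[X]) ^ e - 1) := by
    rw [← Finset.prod_inter_mul_prod_sdiff A B, ← Finset.prod_inter_mul_prod_sdiff B A,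
      Finset.inter_comm B A] at h
    refine mul_left_cancel₀ ?_ h
    refine Finset.prod_ne_zero_iff.2 fun e he => ?_
    exact (monic_X_pow_sub_C (1 : ZMod 2) (hA e (Finset.mem_inter.1 he).1).ne').ne_zero
  by_contra hne
  have hU : (A \ B ∪ B \ A).Nonempty := by
    rw [Finset.nonempty_iff_ne_empty]
    intro h0
    apply hne
    ext x
    have := Finset.ext_iff.1 h0 x
    simp at this
    tauto
  obtain ⟨d, hm, hmin⟩ := Finset.exists_min_image _ id hU
  have h1 : ∀ e ∈ A \ B, d ≤ e := fun e he => hmin e (Finset.mem_union_left _ he)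
  have h2 : ∀ e ∈ B \ A, d ≤ e := fun e he => hmin e (Finset.mem_union_right _ he)
  rcases Finset.mem_union.1 hm with h' | h'
  · exact dpu_key _ _ d h' (fun hx => (Finset.mem_sdiff.1 hx).2 (Finset.mem_sdiff.1 h').1) h1 h2 hc
  · exact dpu_key _ _ d h' (fun hx => (Finset.mem_sdiff.1 hx).2 (Finset.mem_sdiff.1 h').1)
      h2 h1 hc.symm

/-- Two multisets of positive integers with no repeated elements and the same sum `n`,
whose products `∏_{d} (X^d − 1)` agree in `𝔽₂[X]`, are equal. -/
theorem distinct_parts_unique (n : ℕ) (hn : 0 < n) (D D' : Multiset ℕ)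
    (hD : D.Nodup) (hD' : D'.Nodup)
    (hDpos : ∀ d ∈ D, 0 < d) (hD'pos : ∀ d ∈ D', 0 < d)
    (hDsum : D.sum = n) (hD'sum : D'.sum = n)
    (hprod : (D.map fun d => (X : (ZMod 2)[X]) ^ d - 1).prod =
      (D'.map fun d => (X : (ZMod 2)[X]) ^ d - 1).prod) :
    D = D' := by
  exact congrArg Finset.val (dpu_fin ⟨D, hD⟩ ⟨D', hD'⟩ hDpos hprod)
end

section
/- Let n be a positive integer. For every multiset D of positive integers with sum n, there exists a multiset D' of positive integers with sum n, having no repeated elements, such that ∏_{d ∈ D} (X^d − 1) = ∏_{d ∈ D'} (X^d − 1) in 𝔽₂[X]. -/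
open Polynomial

/-- Every multiset of positive integers with sum `n` has the same product
`∏_{d} (X^d − 1)` in `𝔽₂[X]` as some multiset of positive integers with sum `n`
having no repeated elements. -/
theorem exists_distinct_parts_equivalent (n : ℕ) (hn : 0 < n) (D : Multiset ℕ)
    (hDpos : ∀ d ∈ D, 0 < d) (hDsum : D.sum = n) :
    ∃ D' : Multiset ℕ, (∀ d ∈ D', 0 < d) ∧ D'.sum = n ∧ D'.Nodup ∧
      (D.map fun d => (X : (ZMod 2)[X]) ^ d - 1).prod =
        (D'.map fun d => (X : (ZMod 2)[X]) ^ d - 1).prod := by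
  induction hc : D.card using Nat.strong_induction_on generalizing D with
  | _ k ih =>
    by_cases hD : D.Nodup
    · exact ⟨D, hDpos, hDsum, hD, rfl⟩
    · rw [Multiset.nodup_iff_le] at hD
      push Not at hD
      obtain ⟨a, ha⟩ := hD
      obtain ⟨E, rfl⟩ := Multiset.le_iff_exists_add.mp ha
      have hapos : 0 < a := hDpos a (by simp)
      obtain ⟨D', h1, h2, h3, h4⟩ := ih (E.card + 1) (by simp at hc; omega) ((2 * a) ::ₘ E)
        (by
          intro d hd
          rcases Multiset.mem_cons.mp hd with rfl | hd
          · omega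
          · exact hDpos d (by simp [hd]))
        (by rw [← hDsum]; simp; ring) (by simp)
      refine ⟨D', h1, h2, h3, ?_⟩
      rw [← h4]
      have key : ((X : (ZMod 2)[X]) ^ (2 * a) - 1) = (X ^ a - 1) * (X ^ a - 1) := by
        rw [← pow_two, sub_pow_char, one_pow, ← pow_mul, mul_comm]
      simp [key, mul_assoc]
end

section
/- Let K be a finite field of odd characteristic, let f ∈ K[X] be squarefree, let L be a finite field extension of K, and let M be a field extension of L with [M : L] = 2. Then N_f(L) ≡ N_f(M) (mod 2), where N_f(E) denotes the number of pairs (x, y) ∈ E × E with y² = f(x). -/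
/-- Let `K` be a finite field of odd characteristic, `f ∈ K[X]` squarefree, `L/K` a finite
extension and `M/L` an extension of degree 2. Then the number of solutions of `y² = f(x)`
over `L` is congruent mod 2 to the number of solutions over `M`. -/
theorem card_pairs_modEq_card_pairs_quadratic_ext
    (K : Type*) [Field K] [Fintype K] (hchar : Odd (ringChar K))
    (f : Polynomial K) (hf : Squarefree f)
    (L : Type*) [Field L] [Algebra K L] [FiniteDimensional K L]
    (M : Type*) [Field M] [Algebra K M] [Algebra L M] [IsScalarTower K L M]
    (hM : Module.finrank L M = 2) :
    Nat.card {p : L × L // p.2 ^ 2 = Polynomial.aeval p.1 f} ≡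
      Nat.card {p : M × M // p.2 ^ 2 = Polynomial.aeval p.1 f} [MOD 2] := by
  haveI : FiniteDimensional L M := Module.finite_of_finrank_pos (by omega)
  haveI : Finite L := Module.finite_of_finite K
  haveI : Finite M := Module.finite_of_finite L
  haveI : IsGalois L M := inferInstance
  have hG : Nat.card (M ≃ₐ[L] M) = 2 := by rw [IsGalois.card_aut_eq_finrank, hM]
  have hp : IsPGroup 2 (M ≃ₐ[L] M) := IsPGroup.of_card (n := 1) (by simpa using hG)
  -- the Galois group acts on the solutions over `M`
  let S : SubMulAction (M ≃ₐ[L] M) (M × M) :=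
    { carrier := {p | p.2 ^ 2 = Polynomial.aeval p.1 f}
      smul_mem' := by
        rintro σ ⟨x, y⟩ h
        simp only [Set.mem_setOf_eq, Prod.smul_mk, AlgEquiv.smul_def] at h ⊢
        have h1 := Polynomial.aeval_algHom_apply ((σ : M →ₐ[L] M).restrictScalars K) x f
        have h2 : Polynomial.aeval (σ x) f = σ (Polynomial.aeval x f) := h1
        rw [h2, ← h, map_pow] }
  haveI : Fact (Nat.Prime 2) := ⟨Nat.prime_two⟩
  have key := hp.card_modEq_card_fixedPoints S
  refine Nat.ModEq.trans ?_ key.symm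
  have hinj := (algebraMap L M).injective
  have haev (x : L) : Polynomial.aeval (algebraMap L M x) f
      = algebraMap L M (Polynomial.aeval x f) := Polynomial.aeval_algebraMap_apply M x f
  let φ : {p : L × L // p.2 ^ 2 = Polynomial.aeval p.1 f} →
      MulAction.fixedPoints (M ≃ₐ[L] M) S := fun p =>
    ⟨⟨(algebraMap L M p.1.1, algebraMap L M p.1.2), by
      change (algebraMap L M p.1.2) ^ 2 = Polynomial.aeval (algebraMap L M p.1.1) f
      rw [haev, ← p.2, map_pow]⟩, by
      intro σ
      apply Subtype.ext
      change (σ (algebraMap L M p.1.1), σ (algebraMap L M p.1.2)) = _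
      simp⟩
  have hφ : Function.Bijective φ := by
    constructor
    · rintro ⟨⟨x, y⟩, h⟩ ⟨⟨x', y'⟩, h'⟩ e
      have e' := congrArg (fun z => (z.1.1 : M × M)) e
      have e1 : algebraMap L M x = algebraMap L M x' := congrArg Prod.fst e'
      have e2 : algebraMap L M y = algebraMap L M y' := congrArg Prod.snd e'
      obtain rfl := hinj e1
      obtain rfl := hinj e2
      rfl
    · rintro ⟨⟨⟨x, y⟩, h⟩, hfix⟩
      have hx : ∀ σ : M ≃ₐ[L] M, σ x = x := fun σ =>
        congrArg (fun z : S => (z : M × M).1) (hfix σ)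
      have hy : ∀ σ : M ≃ₐ[L] M, σ y = y := fun σ =>
        congrArg (fun z : S => (z : M × M).2) (hfix σ)
      obtain ⟨a, rfl⟩ := (IsGalois.mem_range_algebraMap_iff_fixed x).2 hx
      obtain ⟨b, rfl⟩ := (IsGalois.mem_range_algebraMap_iff_fixed y).2 hy
      refine ⟨⟨(a, b), ?_⟩, rfl⟩
      apply hinj
      have h' : (algebraMap L M b) ^ 2 = Polynomial.aeval (algebraMap L M a) f := h
      rw [haev] at h'
      simpa using h'
  rw [Nat.card_congr (Equiv.ofBijective φ hφ)]
end

section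
/- Let K be a finite field of odd characteristic, let f ∈ K[X] be squarefree, and let n be a positive integer. For each divisor d of n, let K_d be a field extension of K with [K_d : K] = d. Then n times the number of monic irreducible factors of f in K[X] of degree exactly n is congruent modulo 2 to ∑_{d | n} μ(n/d) · N_f(K_d), where μ is the Möbius function and N_f(E) denotes the number of pairs (x, y) ∈ E × E with y² = f(x). -/
open Polynomial UniqueFactorizationMonoid

lemma aux_count {K : Type*} [Field K] (s : Multiset K[X]) (d : ℕ) (hd : d ≠ 0) :
    ∑ e ∈ d.divisors, e * (s.filter fun g => g.natDegree = e).card =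
      (s.map fun g => if g.natDegree ∣ d then g.natDegree else 0).sum := by
  induction s using Multiset.induction_on with
  | empty => simp
  | cons a s ih =>
    rw [Multiset.map_cons, Multiset.sum_cons, ← ih]
    have : ∀ e ∈ d.divisors, e * ((a ::ₘ s).filter fun g => g.natDegree = e).card =
        (if a.natDegree = e then e else 0) + e * (s.filter fun g => g.natDegree = e).card := by
      intro e _
      by_cases h : a.natDegree = e
      · rw [Multiset.filter_cons_of_pos (p := fun g : K[X] => g.natDegree = e) s h, Multiset.card_cons, if_pos h]; ring
      · rw [Multiset.filter_cons_of_neg (p := fun g : K[X] => g.natDegree = e) s h, if_neg h]; ring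
    rw [Finset.sum_congr rfl this, Finset.sum_add_distrib, Finset.sum_ite_eq]
    simp [hd]

lemma aux_irred {K E : Type*} [Field K] [Finite K] [Field E] [Algebra K E]
    (d : ℕ) (hd : d ≠ 0) (hE : Module.finrank K E = d) (g : K[X]) (hg : Irreducible g) :
    (g.map (algebraMap K E)).roots.card = if g.natDegree ∣ d then g.natDegree else 0 := by
  have : FiniteDimensional K E := Module.finite_of_finrank_pos (by omega)
  have : Finite E := Module.finite_of_finite K
  have := Fintype.ofFinite E
  split_ifs with h
  · rw [hg.natDegree_dvd_iff_dvd_X_pow_card_pow_sub_X] at h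
    have h2 := Polynomial.map_dvd (algebraMap K E) h
    have hc : Nat.card K ^ d = Fintype.card E := by
      rw [← hE, ← Nat.card_eq_fintype_card, Module.natCard_eq_pow_finrank (K := K) (V := E)]
    rw [hc] at h2
    simp only [Polynomial.map_sub, Polynomial.map_pow, Polynomial.map_X] at h2
    have hs : (X ^ Fintype.card E - X : E[X]).Splits := by
      rw [splits_iff_card_roots, FiniteField.roots_X_pow_card_sub_X,
        FiniteField.X_pow_card_sub_X_natDegree_eq E Fintype.one_lt_card]
      rfl
    have := (hs.of_dvd (FiniteField.X_pow_card_sub_X_ne_zero E Fintype.one_lt_card) h2)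
    rw [← this.natDegree_eq_card_roots, natDegree_map]
  · rw [Multiset.card_eq_zero, Multiset.eq_zero_iff_forall_notMem]
    intro x hx
    apply h
    have hx' := (mem_roots'.1 hx).2
    rw [IsRoot.def, eval_map_algebraMap] at hx'
    have key := minpoly.eq_of_irreducible hg hx'
    have h3 := minpoly.degree_dvd (K := K) (x := x) (L := E) (Algebra.IsIntegral.isIntegral x)
    rwa [hE, ← key, natDegree_mul_C (inv_ne_zero (leadingCoeff_ne_zero.2 hg.ne_zero))] at h3

lemma aux_roots {K E : Type*} [Field K] [Finite K] [DecidableEq K] [Field E] [Algebra K E]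
    (d : ℕ) (hd : d ≠ 0) (hE : Module.finrank K E = d) (f : K[X]) (hf : Squarefree f) :
    Nat.card {x : E // aeval x f = 0} =
      ∑ e ∈ d.divisors, e * ((normalizedFactors f).filter fun g => g.natDegree = e).card := by
  classical
  have hf0 : f ≠ 0 := hf.ne_zero
  have hsep : f.Separable := PerfectField.separable_iff_squarefree.2 hf
  have hm0 : f.map (algebraMap K E) ≠ 0 := Polynomial.map_ne_zero hf0
  have h1 : Nat.card {x : E // aeval x f = 0} = (f.map (algebraMap K E)).roots.card := by
    rw [← Multiset.toFinset_card_of_nodup (nodup_roots hsep.map), ← Nat.card_eq_finsetCard]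
    apply Nat.card_congr
    apply Equiv.subtypeEquivRight
    intro x
    rw [Multiset.mem_toFinset, mem_roots hm0, IsRoot.def, eval_map_algebraMap]
  rw [h1, aux_count _ d hd]
  obtain ⟨u, hu⟩ := prod_normalizedFactors hf0
  have h2 : (f.map (algebraMap K E)).roots =
      ((normalizedFactors f).map (Polynomial.map (algebraMap K E))).prod.roots := by
    obtain ⟨c, hc, hcu⟩ := Polynomial.isUnit_iff.1 u.isUnit
    have hu' : f = (normalizedFactors f).prod * C c := by rw [hcu]; exact hu.symm
    rw [congrArg (Polynomial.map (algebraMap K E)) hu', Polynomial.map_mul, map_C, mul_comm, roots_C_mul, Polynomial.map_multiset_prod]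
    simpa using hc.ne_zero
  rw [h2, roots_multiset_prod, Multiset.card_bind, Multiset.map_map]
  · congr 1
    apply Multiset.map_congr rfl
    intro g hg
    exact aux_irred d hd hE g (irreducible_of_normalized_factor g hg)
  · intro h0
    obtain ⟨g, hg, h⟩ := Multiset.mem_map.1 h0
    exact Polynomial.map_ne_zero (irreducible_of_normalized_factor g hg).ne_zero h

lemma aux_parity {K E : Type*} [Field K] [Field E] [Finite E] [Algebra K E]
    (h2 : (2 : E) ≠ 0) (f : K[X]) :
    Nat.card {p : E × E // p.2 ^ 2 = aeval p.1 f} ≡ Nat.card {x : E // aeval x f = 0} [MOD 2] := by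
  classical
  have := Fintype.ofFinite E
  let φ : Function.End {p : E × E // p.2 ^ 2 = aeval p.1 f} :=
    fun p => ⟨(p.1.1, -p.1.2), by simpa using p.2⟩
  have hφ : φ ^ 2 ^ 1 = 1 := by
    funext p
    simp only [pow_one, pow_two]
    change φ (φ p) = p
    simp [φ]
  have : Fact (Nat.Prime 2) := ⟨Nat.prime_two⟩
  have key := Equiv.Perm.card_fixedPoints_modEq hφ
  rw [← Nat.card_eq_fintype_card, ← Nat.card_eq_fintype_card] at key
  have e : Function.fixedPoints φ ≃ {x : E // aeval x f = 0} :=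
    { toFun := fun p => ⟨p.1.1.1, by
        have h := congrArg (fun q => q.1.2) p.2
        have h3 : p.1.1.2 = 0 := by
          have h : -p.1.1.2 = p.1.1.2 := h
          have : 2 * p.1.1.2 = 0 := by linear_combination -h
          exact (mul_eq_zero.1 this).resolve_left h2
        rw [← p.1.2, h3]; simp⟩
      invFun := fun x => ⟨⟨(x.1, 0), by simp [x.2]⟩, by
        simp [Function.mem_fixedPoints, Function.IsFixedPt, φ]⟩
      left_inv := fun p => by
        have h := congrArg (fun q => q.1.2) p.2
        have h3 : p.1.1.2 = 0 := by
          have h : -p.1.1.2 = p.1.1.2 := h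
          have : 2 * p.1.1.2 = 0 := by linear_combination -h
          exact (mul_eq_zero.1 this).resolve_left h2
        apply Subtype.ext
        apply Subtype.ext
        exact Prod.ext rfl h3.symm
      right_inv := fun x => rfl }
  rwa [Nat.card_congr e] at key

/-- Let `K` be a finite field of odd characteristic, `f ∈ K[X]` squarefree, `n ≥ 1`, and
for each divisor `d` of `n` let `L d` be an extension of `K` of degree `d`. Then `n` times
the number of monic irreducible factors of `f` of degree exactly `n` is congruent mod 2 to
`∑_{d ∣ n} μ(n/d) ⬝ N_f(L d)`, where `N_f(E)` is the number of pairs `(x, y) ∈ E × E` with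
`y² = f(x)`. -/
theorem mul_card_factors_modEq_moebius_sum
    (K : Type*) [Field K] [Fintype K] [DecidableEq K] (hchar : Odd (ringChar K))
    (f : Polynomial K) (hf : Squarefree f) (n : ℕ) (hn : 0 < n)
    (L : ℕ → Type*) [∀ d, Field (L d)] [∀ d, Algebra K (L d)]
    (hL : ∀ d, d ∣ n → Module.finrank K (L d) = d) :
    (n : ℤ) * (((normalizedFactors f).filter fun g => g.natDegree = n).card : ℤ) ≡
      ∑ d ∈ n.divisors, (ArithmeticFunction.moebius (n / d) : ℤ) *
        (Nat.card {p : L d × L d // p.2 ^ 2 = Polynomial.aeval p.1 f} : ℤ) [ZMOD 2] := by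
  have hmob := (ArithmeticFunction.sum_eq_iff_sum_mul_moebius_eq (R := ℤ)
    (f := fun e => (e : ℤ) * (((normalizedFactors f).filter fun g => g.natDegree = e).card : ℤ))
    (g := fun d => ∑ e ∈ d.divisors,
      (e : ℤ) * (((normalizedFactors f).filter fun g => g.natDegree = e).card : ℤ))).1
    (fun _ _ => rfl) n hn
  simp only [Int.cast_id] at hmob
  rw [Nat.sum_divisorsAntidiagonal' (f := fun x y => (ArithmeticFunction.moebius x : ℤ) *
    ∑ e ∈ y.divisors,
      (e : ℤ) * (((normalizedFactors f).filter fun g => g.natDegree = e).card : ℤ))] at hmob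
  rw [← hmob]
  symm
  apply Int.ModEq.sum
  intro d hd
  have hdn := Nat.dvd_of_mem_divisors hd
  have hd0 : d ≠ 0 := (Nat.pos_of_mem_divisors hd).ne'
  have hE := hL d hdn
  have : FiniteDimensional K (L d) := Module.finite_of_finrank_pos (by omega)
  have : Finite (L d) := Module.finite_of_finite K
  have h2K : (2 : K) ≠ 0 := Ring.two_ne_zero (by intro h; rw [h] at hchar; revert hchar; decide)
  have h2 : (2 : L d) ≠ 0 := by
    have := (map_ne_zero (algebraMap K (L d))).2 h2K
    rwa [map_ofNat] at this
  apply Int.ModEq.mul_left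
  have key := aux_parity h2 f
  rw [aux_roots d hd0 hE f hf] at key
  have := Int.natCast_modEq_iff.2 key
  push_cast at this
  exact this
end

section
/- Let K be a finite field of odd characteristic, let f ∈ K[X] be a squarefree polynomial of degree 8, let L₃ be a field extension of K with [L₃ : K] = 3, and let L₅ be a field extension of K with [L₅ : K] = 5. Then it is not the case that N_f(K) is even, N_f(L₃) is odd, and N_f(L₅) is even, where N_f(E) denotes the number of pairs (x, y) ∈ E × E with y² = f(x). -/
open Polynomial UniqueFactorizationMonoid in
lemma card_points_parity (E : Type*) [Field E] [Fintype E] [DecidableEq E] (h2 : (2 : E) ≠ 0)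
    (g : E → E) :
    ((Nat.card {p : E × E // p.2 ^ 2 = g p.1} : ℕ) : ZMod 2) =
      ((Finset.univ.filter (fun x : E => g x = 0)).card : ZMod 2) := by
  classical
  rw [Nat.card_eq_fintype_card, Fintype.card_subtype]
  rw [← Finset.card_filter_add_card_filter_not (s := Finset.univ.filter
    (fun p : E × E => p.2 ^ 2 = g p.1)) (fun p => p.2 = 0)]
  push_cast
  have h1 : (((Finset.univ.filter (fun p : E × E => p.2 ^ 2 = g p.1)).filter
      (fun p => ¬ p.2 = 0)).card : ZMod 2) = 0 := by
    rw [Finset.card_eq_sum_ones, Nat.cast_sum]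
    refine Finset.sum_involution (fun p _ => (p.1, -p.2)) ?_ ?_ ?_ ?_
    · intro a _
      decide
    · rintro ⟨a, b⟩ ha _ h
      simp only [Finset.mem_filter, Finset.mem_univ, true_and] at ha
      simp only [Prod.mk.injEq, true_and] at h
      apply ha.2
      have : (2 : E) * b = 0 := by linear_combination -h
      exact (mul_eq_zero.mp this).resolve_left h2
    · rintro ⟨a, b⟩ ha
      simpa using ha
    · rintro ⟨a, b⟩ ha
      simp
  rw [h1, add_zero]
  congr 1
  refine Finset.card_bij' (fun p _ => p.1) (fun x _ => (x, 0)) ?_ ?_ ?_ ?_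
  · rintro ⟨a, b⟩ ha
    simp only [Finset.mem_filter, Finset.mem_univ, true_and] at ha ⊢
    rw [← ha.1, ha.2]; simp
  · intro x hx
    simp only [Finset.mem_filter, Finset.mem_univ, true_and] at hx ⊢
    simp [hx]
  · rintro ⟨a, b⟩ ha
    simp only [Finset.mem_filter, Finset.mem_univ, true_and] at ha ⊢
    rw [ha.2]
  · intro x hx
    rfl

open Polynomial UniqueFactorizationMonoid in
lemma card_roots_irred (K L : Type*) [Field K] [Fintype K] [Field L] [Fintype L] [DecidableEq L]
    [Algebra K L] (p : K[X]) (hp : Irreducible p) :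
    (Finset.univ.filter (fun x : L => aeval x p = 0)).card =
      if p.natDegree ∣ Module.finrank K L then p.natDegree else 0 := by
  split_ifs with h
  · have hd := hp.natDegree_dvd_iff_dvd_X_pow_card_pow_sub_X.mp h
    have hc : Nat.card K ^ Module.finrank K L = Nat.card L := by
      exact (Module.natCard_eq_pow_finrank (K := K) (V := L)).symm
    rw [hc] at hd
    have hs : (p.map (algebraMap K L)).Splits := by
      refine Splits.of_dvd (Polynomial.splits_X_pow_nat_card_sub_X (K := L)) ?_ ?_
      · exact FiniteField.X_pow_card_sub_X_ne_zero _ Finite.one_lt_card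
      · simpa using Polynomial.map_dvd (algebraMap K L) hd
    have hsep : p.Separable := PerfectField.separable_of_irreducible hp
    rw [← card_rootSet_eq_natDegree hsep hs, ← Set.toFinset_card]
    congr 1
    ext x
    simp [mem_rootSet, hp.ne_zero]
  · rw [Finset.card_eq_zero, Finset.filter_eq_empty_iff]
    intro x _ hx
    apply h
    have hi : IsIntegral K x := Algebra.IsIntegral.isIntegral x
    have key := minpoly.Irreducible.eq_minpoly hp hx
    rw [key, natDegree_C_mul (leadingCoeff_ne_zero.mpr hp.ne_zero)]
    exact minpoly.degree_dvd hi

open Polynomial UniqueFactorizationMonoid in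
lemma card_roots_factors (K L : Type*) [Field K] [DecidableEq K] [Field L] [Fintype L]
    [DecidableEq L]
    [Algebra K L] (f : K[X]) (h0 : f ≠ 0) :
    (Finset.univ.filter (fun x : L => aeval x f = 0)).card =
      ∑ p ∈ (normalizedFactors f).toFinset,
        (Finset.univ.filter (fun x : L => aeval x p = 0)).card := by
  classical
  rw [← Finset.card_biUnion]
  · congr 1
    ext x
    simp only [Finset.mem_filter, Finset.mem_univ, true_and, Finset.mem_biUnion,
      Multiset.mem_toFinset]
    constructor
    · intro h
      rw [← leadingCoeff_mul_prod_normalizedFactors f, map_mul, aeval_C, mul_eq_zero] at h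
      have h' := h.resolve_left (by simpa using h0)
      rw [map_multiset_prod, Multiset.prod_eq_zero_iff, Multiset.mem_map] at h'
      exact h'
    · rintro ⟨p, hp, hx⟩
      exact aeval_eq_zero_of_dvd_aeval_eq_zero (dvd_of_mem_normalizedFactors hp) hx
  · intro p hp q hq hpq
    rw [Finset.mem_coe, Multiset.mem_toFinset, Polynomial.mem_normalizedFactors_iff h0] at hp hq
    rw [Function.onFun, Finset.disjoint_left]
    intro x hx hy
    simp only [Finset.mem_filter, Finset.mem_univ, true_and] at hx hy
    apply hpq
    have h1 : p ∣ q := (hp.1.dvd_iff_aeval_eq_zero hx).mp hy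
    have h2 : q ∣ p := (hq.1.dvd_iff_aeval_eq_zero hy).mp hx
    exact eq_of_monic_of_associated hp.2.1 hq.2.1 (associated_of_dvd_dvd h1 h2)

open Polynomial UniqueFactorizationMonoid in
lemma natDegree_eq_sum_factors (K : Type*) [Field K] [DecidableEq K] (f : K[X])
    (hf : Squarefree f) :
    f.natDegree = ∑ p ∈ (normalizedFactors f).toFinset, p.natDegree := by
  have h0 : f ≠ 0 := hf.ne_zero
  have hn := (squarefree_iff_nodup_normalizedFactors h0).mp hf
  conv_lhs => rw [← leadingCoeff_mul_prod_normalizedFactors f]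
  rw [natDegree_C_mul (leadingCoeff_ne_zero.mpr h0), natDegree_multiset_prod_of_monic]
  · rw [Finset.sum, Multiset.toFinset_val, hn.dedup]
  · intro p hp
    exact ((Polynomial.mem_normalizedFactors_iff h0).mp hp).2.1

open Polynomial UniqueFactorizationMonoid in
lemma parity_points (K E : Type*) [Field K] [Fintype K] [DecidableEq K]
    (hchar : Odd (ringChar K)) (f : K[X])
    (hf : Squarefree f) (hdeg : f.natDegree = 8)
    [Field E] [Algebra K E] (hE : Module.finrank K E ≠ 0) (c : ℕ → ℕ)
    (hc : ∀ k, c k = ((normalizedFactors f).toFinset.filter (fun p => p.natDegree = k)).card) :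
    ((Nat.card {p : E × E // p.2 ^ 2 = aeval p.1 f} : ℕ) : ZMod 2) =
      ((∑ k ∈ Finset.range 9, c k * if k ∣ Module.finrank K E then k else 0 : ℕ) : ZMod 2) := by
  classical
  have : FiniteDimensional K E := Module.finite_of_finrank_pos (Nat.pos_of_ne_zero hE)
  have : Finite E := Module.finite_of_finite K
  have := Fintype.ofFinite E
  have h2 : (2 : E) ≠ 0 := by
    have hK : (2 : K) ≠ 0 := by
      apply Ring.two_ne_zero
      intro h
      rw [h] at hchar
      exact absurd hchar (by decide)
    have := (_root_.map_ne_zero (algebraMap K E)).mpr hK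
    rwa [map_ofNat] at this
  rw [card_points_parity E h2 (fun x => aeval x f), card_roots_factors K E f hf.ne_zero]
  congr 1
  have hle : ∀ p ∈ (normalizedFactors f).toFinset, p.natDegree ∈ Finset.range 9 := by
    intro p hp
    rw [Multiset.mem_toFinset] at hp
    have := natDegree_le_of_dvd (dvd_of_mem_normalizedFactors hp) hf.ne_zero
    rw [Finset.mem_range]; omega
  rw [← Finset.sum_fiberwise_of_maps_to hle]
  refine Finset.sum_congr rfl fun k _ => ?_
  rw [hc, ← smul_eq_mul, ← Finset.sum_const]
  refine Finset.sum_congr rfl fun p hp => ?_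
  rw [Finset.mem_filter, Multiset.mem_toFinset, Polynomial.mem_normalizedFactors_iff hf.ne_zero]
    at hp
  rw [card_roots_irred K E p hp.1.1, hp.2]

/-- Let `K` be a finite field of odd characteristic, `f ∈ K[X]` squarefree of degree 8,
and `L₃`, `L₅` extensions of `K` of degrees 3 and 5 respectively. Writing `N_f(E)` for the
number of pairs `(x, y) ∈ E × E` with `y² = f(x)`, it is impossible that `N_f(K)` is even,
`N_f(L₃)` is odd and `N_f(L₅)` is even. -/
theorem no_genus_three_parities
    (K : Type*) [Field K] [Fintype K] (hchar : Odd (ringChar K))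
    (f : Polynomial K) (hf : Squarefree f) (hdeg : f.natDegree = 8)
    (L₃ : Type*) [Field L₃] [Algebra K L₃] (hL₃ : Module.finrank K L₃ = 3)
    (L₅ : Type*) [Field L₅] [Algebra K L₅] (hL₅ : Module.finrank K L₅ = 5) :
    ¬(Even (Nat.card {p : K × K // p.2 ^ 2 = Polynomial.eval p.1 f}) ∧
      Odd (Nat.card {p : L₃ × L₃ // p.2 ^ 2 = Polynomial.aeval p.1 f}) ∧
      Even (Nat.card {p : L₅ × L₅ // p.2 ^ 2 = Polynomial.aeval p.1 f})) := by
  classical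
  rintro ⟨h1, h3, h5⟩
  obtain ⟨c, hc⟩ : ∃ c : ℕ → ℕ, ∀ k, c k = ((UniqueFactorizationMonoid.normalizedFactors
    f).toFinset.filter (fun p => p.natDegree = k)).card := ⟨_, fun _ => rfl⟩
  have e1 := parity_points K K hchar f hf hdeg (by simp) c hc
  have e3 := parity_points K L₃ hchar f hf hdeg (by omega) c hc
  have e5 := parity_points K L₅ hchar f hf hdeg (by omega) c hc
  have h1' : Even (Nat.card {p : K × K // p.2 ^ 2 = Polynomial.aeval p.1 f}) := by
    simpa only [Polynomial.coe_aeval_eq_eval] using h1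
  have hs : 8 = ∑ k ∈ Finset.range 9, c k * k := by
    rw [← hdeg, natDegree_eq_sum_factors K f hf]
    have hle : ∀ p ∈ (UniqueFactorizationMonoid.normalizedFactors f).toFinset,
        p.natDegree ∈ Finset.range 9 := by
      intro p hp
      rw [Multiset.mem_toFinset] at hp
      have := Polynomial.natDegree_le_of_dvd
        (UniqueFactorizationMonoid.dvd_of_mem_normalizedFactors hp) hf.ne_zero
      rw [Finset.mem_range]; omega
    rw [← Finset.sum_fiberwise_of_maps_to hle]
    refine Finset.sum_congr rfl fun k _ => ?_
    rw [hc, ← smul_eq_mul, ← Finset.sum_const]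
    refine Finset.sum_congr rfl fun p hp => ?_
    exact (Finset.mem_filter.mp hp).2
  rw [ZMod.natCast_eq_natCast_iff', Module.finrank_self] at e1
  rw [ZMod.natCast_eq_natCast_iff', hL₃] at e3
  rw [ZMod.natCast_eq_natCast_iff', hL₅] at e5
  rw [Nat.even_iff] at h1' h5
  rw [Nat.odd_iff] at h3
  rw [h1'] at e1
  rw [h3] at e3
  rw [h5] at e5
  norm_num [Finset.sum_range_succ] at e1 e3 e5 hs
  omega
end

section
/- Let q be an odd prime power, let K be a finite field with q elements, let g ≥ 1, and let f ∈ K[X] be a squarefree polynomial of odd degree 2g + 1. Let n = 2^a · m with m odd, and let L be a field extension of K with [L : K] = n. Then N_f(L) ≡ 2·q^n − #{x ∈ L : f(x) = 0} (mod 2^{a+1}), where N_f(L) denotes the number of pairs (x, y) ∈ L × L with y² = f(x). -/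
open Polynomial IntermediateField in
lemma isSquare_of_even_finrank (E L : Type*) [Field E] [Field L] [Algebra E L] [Fintype E] [Fintype L]
    (h2 : ringChar L ≠ 2) (he : Even (Module.finrank E L)) (y : E) :
    IsSquare (algebraMap E L y) := by
  by_cases hy : y = 0
  · simp [hy]
  have hy' : algebraMap E L y ≠ 0 := by simpa using hy
  rw [FiniteField.isSquare_iff h2 hy']
  have hodd : Fintype.card L % 2 = 1 := FiniteField.odd_card_of_char_ne_two h2
  obtain ⟨k, hk⟩ := he
  have hc : Fintype.card L = (Fintype.card E ^ 2) ^ k := by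
    rw [Module.card_eq_pow_finrank (K := E) (V := L), hk, ← pow_mul]; congr 1; ring
  have hQ : 1 ≤ Fintype.card E := Fintype.card_pos
  have hQodd : Odd (Fintype.card E) := by
    by_contra h
    rw [Nat.not_odd_iff_even] at h
    by_cases hk0 : k = 0
    · have := Fintype.one_lt_card (α := L)
      simp [hc, hk0] at this
    · have : Even (Fintype.card L) := by
        rw [hc]; exact (h.pow_of_ne_zero (by norm_num)).pow_of_ne_zero hk0
      rw [Nat.even_iff] at this; omega
  obtain ⟨Q, hQe⟩ : ∃ Q, Q = Fintype.card E := ⟨_, rfl⟩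
  have hpow : y ^ (Q - 1) = 1 := by rw [hQe]; exact FiniteField.pow_card_sub_one_eq_one y hy
  rw [← hQe] at hc hQ hQodd
  have hd : (Q - 1) ∣ Fintype.card L / 2 := by
    obtain ⟨r, hr⟩ := hQodd
    have h1 : Q ^ 2 - 1 ∣ Fintype.card L - 1 := by
      rw [hc]; simpa using Nat.sub_dvd_pow_sub_pow (Q ^ 2) 1 k
    have h3 : Q ^ 2 - 1 = 2 * ((Q - 1) * (r + 1)) := by
      subst hr
      simp only [Nat.add_sub_cancel]
      apply Nat.sub_eq_of_eq_add; ring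
    obtain ⟨t, ht⟩ := h1
    refine ⟨(r + 1) * t, ?_⟩
    rw [h3] at ht
    have : Fintype.card L - 1 = 2 * ((Q - 1) * ((r + 1) * t)) := by rw [ht]; ring
    omega
  obtain ⟨t, ht⟩ := hd
  rw [← map_pow, ht, pow_mul, hpow, one_pow, map_one]

open Polynomial IntermediateField in
lemma dvd_card_nonsquare (K L : Type*) [Field K] [Fintype K] [Field L] [Fintype L] [Algebra K L]
    (h2 : ringChar L ≠ 2) (f : K[X]) (a m : ℕ) (hL : Module.finrank K L = 2 ^ a * m) :
    2 ^ a ∣ Nat.card {x : L // ¬ IsSquare (aeval x f)} := by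
  classical
  rw [Nat.card_eq_fintype_card, Fintype.card_subtype]
  rw [Finset.card_eq_sum_card_image (minpoly K)]
  apply Finset.dvd_sum
  intro p hp
  obtain ⟨x, hx, rfl⟩ := Finset.mem_image.1 hp
  have hxS : ¬ IsSquare (aeval x f) := by simpa using hx
  have hint : IsIntegral K x := Algebra.IsIntegral.isIntegral x
  have hfib : (Finset.univ.filter (fun x : L => ¬ IsSquare (aeval x f))).filter
      (fun z => minpoly K z = minpoly K x) = ((minpoly K x).rootSet L).toFinset := by
    ext z
    simp only [Finset.mem_filter, Finset.mem_univ, true_and, Set.mem_toFinset]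
    rw [mem_rootSet_of_ne (minpoly.ne_zero hint)]
    constructor
    · rintro ⟨-, h⟩
      rw [← h]; exact minpoly.aeval K z
    · intro h
      have hm : minpoly K z = minpoly K x :=
        (minpoly.eq_of_irreducible_of_monic (minpoly.irreducible hint) h (minpoly.monic hint)).symm
      refine ⟨?_, hm⟩
      obtain ⟨σ, hσ⟩ := Normal.minpoly_eq_iff_mem_orbit (F := K) L |>.1 hm
      intro hsq
      apply hxS
      simp only [AlgEquiv.smul_def] at hσ
      rw [← hσ, Polynomial.aeval_algHom_apply] at hsq
      simpa using hsq.map σ.symm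
  rw [hfib, Set.toFinset_card, card_rootSet_eq_natDegree
    (Algebra.IsSeparable.isSeparable K x) (Normal.splits inferInstance x),
    ← IntermediateField.adjoin.finrank hint]
  have hmul := Module.finrank_mul_finrank K K⟮x⟯ L
  rw [hL] at hmul
  have hodd : Odd (Module.finrank K⟮x⟯ L) := by
    by_contra h
    rw [Nat.not_odd_iff_even] at h
    apply hxS
    have := isSquare_of_even_finrank K⟮x⟯ L h2 h (aeval (AdjoinSimple.gen K x) f)
    rw [← Polynomial.aeval_algebraMap_apply] at this
    simpa using this
  have hcop : Nat.Coprime (2 ^ a) (Module.finrank K⟮x⟯ L) :=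
    (Nat.coprime_two_left.2 hodd).pow_left a
  exact hcop.dvd_of_dvd_mul_right (hmul ▸ Dvd.intro m rfl)

lemma card_pairs_eq (L : Type*) [Field L] [Fintype L] (h2 : ringChar L ≠ 2) (c : L → L) :
    (Nat.card {p : L × L // p.2 ^ 2 = c p.1} : ℤ) = 2 * (Fintype.card L : ℤ)
      - Nat.card {x : L // c x = 0} - 2 * Nat.card {x : L // ¬ IsSquare (c x)} := by
  classical
  let e : {p : L × L // p.2 ^ 2 = c p.1} ≃ Σ x : L, {y : L // y ^ 2 = c x} :=
    { toFun := fun p => ⟨p.1.1, p.1.2, p.2⟩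
      invFun := fun s => ⟨(s.1, s.2.1), s.2.2⟩
      left_inv := fun _ => rfl
      right_inv := fun _ => rfl }
  rw [Nat.card_congr e, Nat.card_eq_fintype_card, Fintype.card_sigma, Nat.card_eq_fintype_card,
    Nat.card_eq_fintype_card, Fintype.card_subtype, Fintype.card_subtype, Finset.card_filter,
    Finset.card_filter, ← Finset.card_univ, Finset.card_eq_sum_ones]
  push_cast
  rw [Finset.mul_sum, Finset.mul_sum, ← Finset.sum_sub_distrib, ← Finset.sum_sub_distrib]
  refine Finset.sum_congr rfl fun x _ => ?_
  have h := quadraticChar_card_sqrts h2 (c x)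
  rw [Set.toFinset_card] at h
  have h' : (Fintype.card {y : L // y ^ 2 = c x} : ℤ) = quadraticChar L (c x) + 1 := by
    rw [← h]; congr 1
  rw [h', quadraticChar_apply, quadraticCharFun]
  split_ifs with h0 h1 <;> simp_all

/-- Let `q` be an odd prime power, `K` a finite field with `q` elements, `g ≥ 1`, and
`f ∈ K[X]` squarefree of odd degree `2g + 1`. Let `n = 2^a ⬝ m` with `m` odd and let
`L/K` be an extension of degree `n`. Then `N_f(L) ≡ 2q^n − #{x ∈ L : f(x) = 0}`
modulo `2^(a+1)`, where `N_f(L)` is the number of pairs `(x, y) ∈ L × L` with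
`y² = f(x)`. -/
theorem card_pairs_modEq_two_pow
    (q : ℕ) (hq : IsPrimePow q) (hqodd : Odd q)
    (K : Type*) [Field K] [Fintype K] (hK : Fintype.card K = q)
    (g : ℕ) (hg : 1 ≤ g) (f : Polynomial K) (hf : Squarefree f)
    (hdeg : f.natDegree = 2 * g + 1)
    (a m : ℕ) (hm : Odd m)
    (L : Type*) [Field L] [Algebra K L] (hL : Module.finrank K L = 2 ^ a * m) :
    (Nat.card {p : L × L // p.2 ^ 2 = Polynomial.aeval p.1 f} : ℤ) ≡
      2 * (q : ℤ) ^ (2 ^ a * m) -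
        (Nat.card {x : L // Polynomial.aeval x f = 0} : ℤ) [ZMOD 2 ^ (a + 1)] := by
  have hpos : 0 < Module.finrank K L := by
    rw [hL]; exact Nat.mul_pos (by positivity) hm.pos
  haveI : FiniteDimensional K L := Module.finite_of_finrank_pos hpos
  haveI : Finite L := Module.finite_of_finite K
  haveI : Fintype L := Fintype.ofFinite L
  have hcard : Fintype.card L = q ^ (2 ^ a * m) := by
    rw [Module.card_eq_pow_finrank (K := K) (V := L), hK, hL]
  have h2 : ringChar L ≠ 2 := by
    intro h
    have h1 := FiniteField.even_card_of_char_two h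
    have h3 : Odd (Fintype.card L) := by rw [hcard]; exact hqodd.pow
    rw [Nat.odd_iff] at h3; omega
  obtain ⟨t, ht⟩ := dvd_card_nonsquare K L h2 f a m hL
  rw [card_pairs_eq L h2 (fun x => Polynomial.aeval x f), ht, hcard]
  rw [Int.modEq_iff_dvd]
  refine ⟨t, ?_⟩
  push_cast
  ring
end

section
/- Let q be an odd prime power, let K be a finite field with q elements, and let f ∈ K[X] be a squarefree polynomial of degree 7. Let L₃ be a field extension of K with [L₃ : K] = 3, and for each m ≥ 1 let L^{(m)} be a field extension of K with [L^{(m)} : K] = 2^m. If N_f(K) is even and N_f(L₃) is odd, then for every m ≥ 1 one has N_f(L^{(m)}) ≡ 2^{m+1} − 2 (mod 2^{m+1}), where N_f(E) denotes the number of pairs (x, y) ∈ E × E with y² = f(x). -/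
open Function

lemma aux_dvd {S : Type*} [Finite S] (h : S → S) (d : ℕ) (hd : 0 < d)
    (hS : ∀ x, minimalPeriod h x = d) : d ∣ Nat.card S := by
  classical
  rcases isEmpty_or_nonempty S with hE | ⟨⟨x0⟩⟩
  · simp
  have hid : ∀ x, h^[d] x = x := fun x => by
    have := isPeriodicPt_minimalPeriod h x
    rw [hS x] at this
    exact this
  have h1 : d - 1 + 1 = d := Nat.sub_add_cancel hd
  let τ : Equiv.Perm S :=
    { toFun := h
      invFun := h^[d-1]
      left_inv := fun x => by
        rw [← iterate_succ_apply, Nat.succ_eq_add_one, h1]; exact hid x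
      right_inv := fun x => by
        rw [← iterate_succ_apply' h, Nat.succ_eq_add_one, h1]; exact hid x }
  have hpow : ∀ (k : ℕ) x, (τ ^ k) x = h^[k] x := fun k x => by
    rw [Equiv.Perm.coe_pow]; rfl
  have hone : ∀ (k : ℕ) x, (τ ^ k) x = x → d ∣ k := fun k x hx => by
    rw [hpow] at hx
    rw [← hS x]
    exact IsPeriodicPt.minimalPeriod_dvd hx
  have hd1 : τ ^ d = 1 := by
    ext x; rw [hpow, hid]; rfl
  have hord : orderOf τ = d := by
    apply Nat.dvd_antisymm (orderOf_dvd_of_pow_eq_one hd1)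
    apply hone _ x0
    rw [pow_orderOf_eq_one]; rfl
  have hfree : ∀ x : S, MulAction.stabilizer (Subgroup.zpowers τ) x = ⊥ := by
    intro x
    rw [eq_bot_iff]
    rintro ⟨g, hg⟩ hgx
    rw [← mem_powers_iff_mem_zpowers] at hg
    obtain ⟨k, rfl⟩ := hg
    have hgx' : (τ ^ k) x = x := hgx
    obtain ⟨c, rfl⟩ := hone k x hgx'
    rw [Subgroup.mem_bot]
    apply Subtype.ext
    simp [pow_mul, hd1]
  have e := MulAction.selfEquivOrbitsQuotientProd hfree
  rw [Nat.card_congr e, Nat.card_prod, Nat.card_zpowers, hord]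
  exact dvd_mul_left _ _

lemma aux_dvd_set {α : Type*} [Finite α] (h : α → α) (d : ℕ) (hd : 0 < d) (P : α → Prop)
    (hP : ∀ x, P x → P (h x)) (hS : ∀ x, P x → minimalPeriod h x = d) :
    d ∣ Nat.card {x // P x} := by
  refine aux_dvd (fun x : {x // P x} => (⟨h x.1, hP x.1 x.2⟩ : {x // P x})) d hd ?_
  rintro ⟨x, hx⟩
  rw [← hS x hx]
  apply minimalPeriod_eq_minimalPeriod_iff.2
  intro n
  have : ∀ (n : ℕ) (y : {x // P x}), (((fun x : {x // P x} =>
      (⟨h x.1, hP x.1 x.2⟩ : {x // P x}))^[n] y).1) = h^[n] y.1 := by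
    intro n
    induction n with
    | zero => intro y; rfl
    | succ n ih => intro y; rw [iterate_succ_apply, iterate_succ_apply, ih]
  unfold IsPeriodicPt IsFixedPt
  rw [Subtype.ext_iff, this]

lemma aux_perm_s15 {R : Type*} [Finite R] (hR : Nat.card R = 7) (σ : R → R) (hσ : Injective σ)
    (r : ℕ → ℕ) (hr : ∀ n, r n = Nat.card {x // σ^[n] x = x})
    (h1 : Even (r 1)) (h3 : Odd (r 3)) :
    (r 2 = 0 ∨ r 2 = 4) ∧ ∀ m, 2 ≤ m → r (2 ^ m) = 4 := by
  classical
  have := Fintype.ofFinite R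
  let a : ℕ → ℕ := fun d => (Finset.univ.filter fun x => minimalPeriod σ x = d).card
  have ha : ∀ d, 0 < d → d ∣ a d := by
    intro d hd
    have := aux_dvd_set σ d hd (fun x => minimalPeriod σ x = d)
      (fun x hx => by
        rw [minimalPeriod_apply (hσ.mem_periodicPts x)]; exact hx) (fun x hx => hx)
    rw [Nat.card_eq_fintype_card, Fintype.card_subtype] at this
    exact this
  have hpos : ∀ x, 0 < minimalPeriod σ x := fun x =>
    minimalPeriod_pos_of_mem_periodicPts (hσ.mem_periodicPts x)
  have hr' : ∀ n, r n = (Finset.univ.filter fun x => minimalPeriod σ x ∣ n).card := by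
    intro n
    rw [hr, Nat.card_eq_fintype_card, Fintype.card_subtype]
    congr 1
    ext x
    simp only [Finset.mem_filter, Finset.mem_univ, true_and]
    exact isPeriodicPt_iff_minimalPeriod_dvd
  have hsum : ∀ n, 0 < n → r n = ∑ d ∈ n.divisors, a d := by
    intro n hn
    rw [hr', Finset.card_eq_sum_card_fiberwise (f := minimalPeriod σ) (t := n.divisors)]
    · apply Finset.sum_congr rfl
      intro d hd
      congr 1
      ext x
      simp only [Finset.mem_filter, Finset.mem_univ, true_and]
      constructor
      · exact fun h => h.2
      · rintro rfl; exact ⟨(Nat.mem_divisors.1 hd).1, rfl⟩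
    · intro x hx
      simp at hx
      simp [hx, hn.ne']
  have hle : ∀ t : Finset ℕ, ∑ d ∈ t, a d ≤ 7 := by
    intro t
    rw [← hR, Nat.card_eq_fintype_card]
    rw [← Finset.card_biUnion]
    · exact Finset.card_le_univ _
    · intro i _ j _ hij
      rw [Function.onFun, Finset.disjoint_left]
      intro x hx hy
      simp at hx hy
      omega
  have e1 := hsum 1 (by norm_num)
  have e2 := hsum 2 (by norm_num)
  have e3 := hsum 3 (by norm_num)
  have e4 := hsum 4 (by norm_num)
  rw [show Nat.divisors 1 = {1} by decide] at e1
  rw [show Nat.divisors 2 = {1,2} by decide] at e2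
  rw [show Nat.divisors 3 = {1,3} by decide] at e3
  rw [show Nat.divisors 4 = {1,2,4} by decide] at e4
  have hbig : ∀ d, 5 ≤ d → a 3 = 3 → a d = 0 := by
    intro d hd h
    have h1 := hle {3, d}
    rw [Finset.sum_pair (by omega)] at h1
    by_contra h0
    have := Nat.le_of_dvd (Nat.pos_of_ne_zero h0) (ha d (by omega))
    omega
  have hall := hle {1,2,3,4}
  simp at e1 e2 e3 e4 hall
  have d2 := ha 2 (by norm_num)
  have d3 := ha 3 (by norm_num)
  have d4 := ha 4 (by norm_num)
  have ha3 : a 3 = 3 := by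
    rw [e1] at h1; rw [e3] at h3
    obtain ⟨u, hu⟩ := h1
    obtain ⟨v, hv⟩ := h3
    omega
  have htot : 7 = a 1 + (a 2 + (a 3 + a 4)) := by
    have : (7 : ℕ) = ∑ d ∈ ({1,2,3,4} : Finset ℕ), a d := by
      rw [← hR, Nat.card_eq_fintype_card, ← Finset.card_univ,
        Finset.card_eq_sum_card_fiberwise (f := minimalPeriod σ) (t := {1,2,3,4})]
      intro x _
      by_contra hx
      have h0 := hpos x
      simp only [Finset.coe_insert, Finset.coe_singleton, Set.mem_insert_iff,
        Set.mem_singleton_iff, not_or] at hx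
      have := hbig (minimalPeriod σ x) (by omega) ha3
      have h2 : x ∈ (Finset.univ.filter fun y => minimalPeriod σ y = minimalPeriod σ x) := by simp
      rw [Finset.card_eq_zero.1 this] at h2
      simp at h2
    simpa using this
  obtain ⟨u, hu⟩ := h1
  refine ⟨by omega, fun m hm => ?_⟩
  have hge : r 4 ≤ r (2 ^ m) := by
    rw [hr', hr']
    apply Finset.card_le_card
    intro x hx
    simp at hx ⊢
    exact hx.trans (pow_dvd_pow 2 hm)
  have hub : r (2 ^ m) + a 3 ≤ 7 := by
    have hni : 3 ∉ (2 ^ m).divisors := by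
      intro h
      have := (Nat.mem_divisors.1 h).1
      have := Nat.Prime.dvd_of_dvd_pow Nat.prime_three this
      omega
    have := hle (insert 3 (2 ^ m).divisors)
    rw [Finset.sum_insert hni] at this
    rw [hsum _ (by positivity)]
    omega
  omega

lemma aux_N {E : Type*} [Field E] [Finite E] (h2 : (2 : E) ≠ 0) (g : E → E) :
    Nat.card {p : E × E // p.2 ^ 2 = g p.1} =
      Nat.card {x // g x = 0} + 2 * Nat.card {x // g x ≠ 0 ∧ IsSquare (g x)} := by
  classical
  have := Fintype.ofFinite E
  have e : {p : E × E // p.2 ^ 2 = g p.1} ≃ Σ x : E, {y : E // y ^ 2 = g x} :=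
    { toFun := fun p => ⟨p.1.1, p.1.2, p.2⟩
      invFun := fun p => ⟨(p.1, p.2.1), p.2.2⟩
      left_inv := fun _ => rfl
      right_inv := fun _ => rfl }
  rw [Nat.card_congr e, Nat.card_sigma]
  simp only [Nat.card_eq_fintype_card]
  rw [Fintype.card_subtype (fun x => g x = 0), Fintype.card_subtype, Finset.card_filter, Finset.card_filter, Finset.mul_sum,
    ← Finset.sum_add_distrib]
  apply Finset.sum_congr rfl
  intro x _
  by_cases h0 : g x = 0
  · simp [h0]
  by_cases hs : IsSquare (g x)
  · simp only [h0, hs]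
    obtain ⟨y, hy⟩ := hs
    rw [Fintype.card_subtype]
    have hy0 : y ≠ 0 := by rintro rfl; simp at hy; exact h0 hy
    have : (Finset.univ.filter fun z => z ^ 2 = g x) = {y, -y} := by
      ext z
      simp only [Finset.mem_filter, Finset.mem_univ, true_and, Finset.mem_insert,
        Finset.mem_singleton]
      rw [hy, ← pow_two, sq_eq_sq_iff_eq_or_eq_neg]
    rw [this, Finset.card_pair]
    · simp [h0]
    · intro h
      have : (2:E) * y = 0 := by linear_combination h
      simp [h2, hy0] at this
  · simp only [h0, hs]
    simp only [if_false, and_false, mul_zero, add_zero]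
    rw [Fintype.card_eq_zero_iff]
    exact ⟨fun z => hs ⟨z.1, z.2.symm.trans (pow_two _)⟩⟩

lemma aux_roots_s15 {K E Ω : Type*} [Field K] [Finite K] [Field E] [Algebra K E] [Field Ω]
    [Algebra K Ω] [IsAlgClosed Ω] (f : Polynomial K) (n : ℕ) (hn : 0 < n)
    (hE : Module.finrank K E = n) (j : ℕ) (hj : j ∣ n) :
    Nat.card {x : E // Polynomial.aeval x f = 0 ∧ x ^ (Nat.card K ^ j) = x} =
    Nat.card {x : Ω // Polynomial.aeval x f = 0 ∧ x ^ (Nat.card K ^ j) = x} := by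
  have : FiniteDimensional K E := Module.finite_of_finrank_pos (by omega)
  have : Finite E := Module.finite_of_finite K
  have := Fintype.ofFinite E
  have hc : Nat.card E = Nat.card K ^ n := by rw [Module.natCard_eq_pow_finrank (K := K), hE]
  have hq : 1 < Nat.card K := Finite.one_lt_card
  let i : E →ₐ[K] Ω := IsAlgClosed.lift
  have hi : Injective i := i.toRingHom.injective
  have hsurj : ∀ y : Ω, y ^ (Nat.card K ^ n) = y → ∃ x, i x = y := by
    intro y hy
    classical
    rw [← hc] at hy
    have h1 : 1 < Nat.card E := Finite.one_lt_card
    have hne := FiniteField.X_pow_card_sub_X_ne_zero Ω h1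
    have hsub : Finset.univ.image i ⊆
        (Polynomial.X ^ Nat.card E - Polynomial.X : Polynomial Ω).roots.toFinset := by
      intro z hz
      obtain ⟨x, -, rfl⟩ := Finset.mem_image.1 hz
      rw [Multiset.mem_toFinset, Polynomial.mem_roots hne]
      simp only [Polynomial.IsRoot.def, Polynomial.eval_sub, Polynomial.eval_pow,
        Polynomial.eval_X]
      rw [← map_pow, Nat.card_eq_fintype_card, FiniteField.pow_card, sub_self]
    have hcard : (Polynomial.X ^ Nat.card E - Polynomial.X : Polynomial Ω).roots.toFinset.card
        ≤ (Finset.univ.image i).card := by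
      rw [Finset.card_image_of_injective _ hi, Finset.card_univ]
      refine (Multiset.toFinset_card_le _).trans ((Polynomial.card_roots' _).trans ?_)
      rw [FiniteField.X_pow_card_sub_X_natDegree_eq _ h1, Nat.card_eq_fintype_card]
    have heq := Finset.eq_of_subset_of_card_le hsub hcard
    have hy' : y ∈ (Polynomial.X ^ Nat.card E - Polynomial.X : Polynomial Ω).roots.toFinset := by
      rw [Multiset.mem_toFinset, Polynomial.mem_roots hne]
      simp only [Polynomial.IsRoot.def, Polynomial.eval_sub, Polynomial.eval_pow,
        Polynomial.eval_X]
      rw [hy, sub_self]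
    rw [← heq] at hy'
    obtain ⟨x, -, hx⟩ := Finset.mem_image.1 hy'
    exact ⟨x, hx⟩
  have hit : ∀ (y : Ω), y ^ (Nat.card K ^ j) = y → y ^ (Nat.card K ^ n) = y := by
    intro y hy
    obtain ⟨c, rfl⟩ := hj
    rw [pow_mul]
    generalize Nat.card K ^ j = Q at hy
    clear hE hn hc hsurj
    induction c with
    | zero => simp
    | succ c ih => rw [pow_succ, pow_mul, ih, hy]
  refine Nat.card_congr (Equiv.ofBijective (fun x => ⟨i x.1, ?_, ?_⟩) ⟨?_, ?_⟩)
  · rw [Polynomial.aeval_algHom_apply, x.2.1, map_zero]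
  · rw [← map_pow, x.2.2]
  · intro x y h
    exact Subtype.ext (hi (congrArg Subtype.val h))
  · rintro ⟨y, hy0, hy⟩
    obtain ⟨x, rfl⟩ := hsurj y (hit y hy)
    refine ⟨⟨x, ?_, ?_⟩, rfl⟩
    · apply hi
      rw [← Polynomial.aeval_algHom_apply, hy0, map_zero]
    · apply hi
      rw [map_pow, hy]

lemma aux_frob_iter {A : Type*} [Monoid A] (q n : ℕ) (x : A) :
    (fun x : A => x ^ q)^[n] x = x ^ (q ^ n) := by
  rw [pow_iterate]

lemma aux_comm {K E : Type*} [Field K] [Finite K] [Field E] [Algebra K E] (f : Polynomial K)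
    (x : E) : Polynomial.aeval (x ^ Nat.card K) f = (Polynomial.aeval x f) ^ Nat.card K := by
  have := Fintype.ofFinite K
  have h := Polynomial.aeval_algHom_apply (FiniteField.frobeniusAlgHom K E) x f
  simp only [FiniteField.coe_frobeniusAlgHom, ← Nat.card_eq_fintype_card] at h
  exact h

lemma aux_comm_pow {K E : Type*} [Field K] [Finite K] [Field E] [Algebra K E] (f : Polynomial K)
    (x : E) (n : ℕ) :
    Polynomial.aeval (x ^ Nat.card K ^ n) f = (Polynomial.aeval x f) ^ Nat.card K ^ n := by
  induction n with
  | zero => simp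
  | succ n ih => rw [pow_succ, pow_mul, aux_comm, ih, ← pow_mul]

lemma aux_main {K E : Type*} [Field K] [Finite K] [Field E] [Algebra K E] (f : Polynomial K)
    (hodd : Odd (Nat.card K)) (h2 : (2 : E) ≠ 0)
    (m : ℕ) (hE : Module.finrank K E = 2 ^ (m + 1)) :
    ∃ c : ℤ, (Nat.card {p : E × E // p.2 ^ 2 = Polynomial.aeval p.1 f} : ℤ) =
      Nat.card {x : E // Polynomial.aeval x f = 0} + 2
      - 2 * Nat.card {x : E // Polynomial.aeval x f = 0 ∧ x ^ (Nat.card K ^ (2 ^ m)) = x}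
      + 2 ^ (m + 2) * c := by
  have : FiniteDimensional K E := Module.finite_of_finrank_pos (by rw [hE]; positivity)
  have : Finite E := Module.finite_of_finite K
  have := Fintype.ofFinite E
  classical
  have hc : Nat.card E = Nat.card K ^ (2 ^ (m + 1)) := by
    rw [Module.natCard_eq_pow_finrank (K := K), hE]
  have hq : 1 < Nat.card K := Finite.one_lt_card
  have hcN : Nat.card K ≠ 0 := by omega
  rw [aux_N h2 (fun x => Polynomial.aeval x f)]
  have hper : ∀ x : E, ¬ x ^ (Nat.card K ^ (2 ^ m)) = x →
      minimalPeriod (fun x : E => x ^ Nat.card K) x = 2 ^ (m + 1) := by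
    intro x hx
    apply minimalPeriod_eq_prime_pow
    · unfold IsPeriodicPt IsFixedPt
      rwa [aux_frob_iter]
    · unfold IsPeriodicPt IsFixedPt
      rw [aux_frob_iter, ← hc, Nat.card_eq_fintype_card, FiniteField.pow_card]
  have hinj : ∀ x : E, ¬ x ^ (Nat.card K ^ (2 ^ m)) = x →
      ¬ (x ^ Nat.card K) ^ (Nat.card K ^ (2 ^ m)) = x ^ Nat.card K := by
    intro x hx h
    apply hx
    rw [← pow_mul, mul_comm, pow_mul] at h
    have := Fintype.ofFinite K
    have hI := (FiniteField.frobeniusAlgHom K E).toRingHom.injective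
    apply hI
    simpa [FiniteField.coe_frobeniusAlgHom, ← Nat.card_eq_fintype_card] using h
  -- complement of the subfield
  have d1 : 2 ^ (m + 1) ∣ Nat.card {x : E // ¬ x ^ (Nat.card K ^ (2 ^ m)) = x} :=
    aux_dvd_set (fun x : E => x ^ Nat.card K) _ (by positivity) _ hinj hper
  have d2 : 2 ^ (m + 1) ∣ Nat.card {x : E // ¬ x ^ (Nat.card K ^ (2 ^ m)) = x ∧
      (Polynomial.aeval x f ≠ 0 ∧ IsSquare (Polynomial.aeval x f))} := by
    refine aux_dvd_set (fun x : E => x ^ Nat.card K) _ (by positivity) _ ?_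
      (fun x hx => hper x hx.1)
    rintro x ⟨hx, h0, hs⟩
    refine ⟨hinj x hx, ?_, ?_⟩
    · rw [aux_comm]; exact pow_ne_zero _ h0
    · rw [aux_comm]; exact hs.pow _
  have hsq : ∀ x : E, x ^ (Nat.card K ^ (2 ^ m)) = x → IsSquare (Polynomial.aeval x f) := by
    intro x hx
    have hz : Polynomial.aeval x f ^ (Nat.card K ^ (2 ^ m)) = Polynomial.aeval x f := by
      rw [← aux_comm_pow, hx]
    generalize Polynomial.aeval x f = z at hz
    by_cases hz0 : z = 0
    · rw [hz0]; exact IsSquare.zero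
    rw [FiniteField.isSquare_iff _ hz0]
    · rw [← Nat.card_eq_fintype_card, hc]
      have hQ : Odd (Nat.card K ^ (2 ^ m)) := hodd.pow
      rw [pow_succ 2 m, pow_mul]
      generalize Nat.card K ^ (2 ^ m) = Q at hz hQ
      obtain ⟨k, rfl⟩ := hQ
      have : (2 * k + 1) ^ 2 / 2 = (2 * k) * (k + 1) := by
        rw [show (2 * k + 1) ^ 2 = 1 + 2 * ((2 * k) * (k + 1)) by ring]
        omega
      rw [this, pow_mul]
      have hz1 : z ^ (2 * k) = 1 := by
        rw [pow_succ] at hz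
        exact mul_right_cancel₀ hz0 (by rw [hz, one_mul])
      rw [hz1, one_pow]
    · intro h
      apply h2
      have := ringChar.Nat.cast_ringChar (R := E)
      rw [h] at this
      exact_mod_cast this
  -- counting
  have c1 : Nat.card {x : E // x ^ (Nat.card K ^ (2 ^ m)) = x} +
      Nat.card {x : E // ¬ x ^ (Nat.card K ^ (2 ^ m)) = x} = Nat.card E := by
    simp only [Nat.card_eq_fintype_card, Fintype.card_subtype]
    rw [Finset.card_filter_add_card_filter_not]; rfl
  have c2 : Nat.card {x : E // Polynomial.aeval x f ≠ 0 ∧ IsSquare (Polynomial.aeval x f)} +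
      Nat.card {x : E // Polynomial.aeval x f = 0 ∧ x ^ (Nat.card K ^ (2 ^ m)) = x} =
      Nat.card {x : E // x ^ (Nat.card K ^ (2 ^ m)) = x} +
      Nat.card {x : E // ¬ x ^ (Nat.card K ^ (2 ^ m)) = x ∧
      (Polynomial.aeval x f ≠ 0 ∧ IsSquare (Polynomial.aeval x f))} := by
    simp only [Nat.card_eq_fintype_card, Fintype.card_subtype, Finset.card_filter]
    rw [← Finset.sum_add_distrib, ← Finset.sum_add_distrib]
    apply Finset.sum_congr rfl
    intro x _
    have := hsq x
    by_cases hA : x ^ (Nat.card K ^ (2 ^ m)) = x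
    · have hs := this hA
      by_cases h0 : Polynomial.aeval x f = 0
      · simp [hA, h0]
      · simp [hA, h0, hs]
    · simp [hA]
  have hmod : (2 ^ (m + 1) : ℕ) ∣ Nat.card E - 1 := by
    rw [hc]
    have hcop : Nat.Coprime (Nat.card K) (2 ^ (m + 1)) :=
      Nat.Coprime.pow_right _ hodd.coprime_two_right
    have h := Nat.ModEq.pow_totient hcop
    rw [Nat.totient_prime_pow_succ Nat.prime_two] at h
    have h' := h.pow 2
    rw [← pow_mul, one_pow, mul_assoc, show (2 - 1) * 2 = 2 from rfl, ← pow_succ] at h'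
    exact (Nat.modEq_iff_dvd' (Nat.one_le_pow _ _ (by omega))).1 h'.symm
  obtain ⟨u, hu⟩ := d1
  obtain ⟨v, hv⟩ := d2
  obtain ⟨w, hw⟩ := hmod
  have hE1 : 1 < Nat.card E := Finite.one_lt_card
  refine ⟨w - u + v, ?_⟩
  have hw' : (Nat.card E : ℤ) = 1 + 2 ^ (m + 1) * w := by
    have : Nat.card E = 1 + 2 ^ (m + 1) * w := by omega
    exact_mod_cast this
  zify at hu hv c1 c2
  push_cast
  rw [pow_succ 2 (m + 1)]
  linear_combination 2 * c2 + 2 * c1 + 2 * hv - 2 * hu + 2 * hw'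

lemma aux_full {K E Ω : Type*} [Field K] [Finite K] [Field E] [Algebra K E] [Field Ω]
    [Algebra K Ω] [IsAlgClosed Ω] (f : Polynomial K) (n : ℕ) (hn : 0 < n)
    (hE : Module.finrank K E = n) :
    Nat.card {x : E // Polynomial.aeval x f = 0} =
    Nat.card {x : Ω // Polynomial.aeval x f = 0 ∧ x ^ (Nat.card K ^ n) = x} := by
  rw [← aux_roots_s15 (E := E) f n hn hE n dvd_rfl]
  have : FiniteDimensional K E := Module.finite_of_finrank_pos (by omega)
  have : Finite E := Module.finite_of_finite K
  have := Fintype.ofFinite E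
  have hc : Nat.card E = Nat.card K ^ n := by rw [Module.natCard_eq_pow_finrank (K := K), hE]
  refine Nat.card_congr (Equiv.subtypeEquivRight fun x => ?_)
  rw [← hc, Nat.card_eq_fintype_card, FiniteField.pow_card]
  simp

/-- Let `q` be an odd prime power, `K` a finite field with `q` elements, and `f ∈ K[X]`
squarefree of degree 7. Let `L₃/K` be an extension of degree 3, and for each `m ≥ 1` let
`L m` be an extension of `K` of degree `2^m`. If `N_f(K)` is even and `N_f(L₃)` is odd,
then `N_f(L m) ≡ 2^(m+1) − 2 (mod 2^(m+1))` for all `m ≥ 1`, where `N_f(E)` is the number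
of pairs `(x, y) ∈ E × E` with `y² = f(x)`. -/
theorem card_pairs_two_power_ext_modEq
    (q : ℕ) (hq : IsPrimePow q) (hqodd : Odd q)
    (K : Type*) [Field K] [Fintype K] (hK : Fintype.card K = q)
    (f : Polynomial K) (hf : Squarefree f) (hdeg : f.natDegree = 7)
    (L₃ : Type*) [Field L₃] [Algebra K L₃] (hL₃ : Module.finrank K L₃ = 3)
    (L : ℕ → Type*) [∀ m, Field (L m)] [∀ m, Algebra K (L m)]
    (hL : ∀ m, 1 ≤ m → Module.finrank K (L m) = 2 ^ m)
    (h0 : Even (Nat.card {p : K × K // p.2 ^ 2 = Polynomial.eval p.1 f}))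
    (h3 : Odd (Nat.card {p : L₃ × L₃ // p.2 ^ 2 = Polynomial.aeval p.1 f})) :
    ∀ m, 1 ≤ m →
      Nat.card {p : L m × L m // p.2 ^ 2 = Polynomial.aeval p.1 f} ≡
        2 ^ (m + 1) - 2 [MOD 2 ^ (m + 1)] := by
  classical
  have hKc : Nat.card K = q := by rw [Nat.card_eq_fintype_card, hK]
  have hodd : Odd (Nat.card K) := by rw [hKc]; exact hqodd
  have h2K : (2 : K) ≠ 0 := by
    intro h
    have h1 := FiniteField.cast_card_eq_zero K
    rw [hK] at h1
    obtain ⟨k, rfl⟩ := hqodd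
    push_cast at h1
    rw [h] at h1
    simp at h1
  have h2A : ∀ (E : Type _) [Field E] [Algebra K E], (2 : E) ≠ 0 := by
    intro E _ _ h
    apply h2K
    apply (algebraMap K E).injective
    rw [map_ofNat, map_zero, h]
  have h2B : (2 : L₃) ≠ 0 := by
    intro h
    apply h2K
    apply (algebraMap K L₃).injective
    rw [map_ofNat, map_zero, h]
  let Ω := AlgebraicClosure K
  have hf0 : f ≠ 0 := hf.ne_zero
  let R := {x : Ω // Polynomial.aeval x f = 0}
  have hset : ∀ x : Ω, Polynomial.aeval x f = 0 ↔ x ∈ f.rootSet Ω := by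
    intro x
    rw [Polynomial.mem_rootSet]
    simp [hf0]
  have hR7 : Nat.card R = 7 := by
    have hsep : f.Separable := PerfectField.separable_iff_squarefree.2 hf
    have := Polynomial.card_rootSet_eq_natDegree hsep (IsAlgClosed.splits (f.map (algebraMap K Ω)))
    rw [← hdeg, ← this, ← Nat.card_eq_fintype_card]
    exact Nat.card_congr (Equiv.subtypeEquivRight hset)
  have : Finite R := Nat.finite_of_card_ne_zero (by omega)
  let σ : R → R := fun x => ⟨x.1 ^ Nat.card K, by
    rw [aux_comm, x.2]
    exact zero_pow (by have := hodd.pos; omega)⟩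
  have hσ : Injective σ := by
    intro x y h
    have h' : x.1 ^ Nat.card K = y.1 ^ Nat.card K := congrArg Subtype.val h
    apply Subtype.ext
    have hI := (FiniteField.frobeniusAlgHom K Ω).toRingHom.injective
    apply hI
    rw [Nat.card_eq_fintype_card] at h'
    simpa [FiniteField.coe_frobeniusAlgHom] using h'
  have hσn : ∀ (n : ℕ) (x : R), (σ^[n] x).1 = x.1 ^ Nat.card K ^ n := by
    intro n
    induction n with
    | zero => intro x; simp
    | succ n ih =>
      intro x
      rw [iterate_succ_apply', pow_succ, pow_mul, ← ih]
  let r : ℕ → ℕ := fun n =>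
    Nat.card {x : Ω // Polynomial.aeval x f = 0 ∧ x ^ (Nat.card K ^ n) = x}
  have hr : ∀ n, r n = Nat.card {x // σ^[n] x = x} := by
    intro n
    refine Nat.card_congr
      { toFun := fun x => ⟨⟨x.1, x.2.1⟩, ?_⟩
        invFun := fun x => ⟨x.1.1, x.1.2, ?_⟩
        left_inv := fun _ => rfl
        right_inv := fun _ => rfl }
    · apply Subtype.ext
      rw [hσn]
      exact x.2.2
    · rw [← hσn, x.2]
  have hK1 : r 1 = Nat.card {x : K // Polynomial.eval x f = 0} := by
    have := aux_roots_s15 (K := K) (E := K) (Ω := Ω) f 1 one_pos (Module.finrank_self K) 1 dvd_rfl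
    refine this.symm.trans ?_
    refine Nat.card_congr (Equiv.subtypeEquivRight fun x => ?_)
    simp [Nat.card_eq_fintype_card, FiniteField.pow_card, Polynomial.coe_aeval_eq_eval]
  have hfull : ∀ (n : ℕ) (E : Type _) [Field E] [Algebra K E], 0 < n →
      Module.finrank K E = n → Nat.card {x : E // Polynomial.aeval x f = 0} = r n := by
    intro n E _ _ hn hE
    exact aux_full f n hn hE
  have hr1 : Even (r 1) := by
    rw [aux_N h2K (fun x => Polynomial.eval x f)] at h0
    rw [hK1]
    simpa [Nat.even_add] using h0
  have hr3 : Odd (r 3) := by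
    have : FiniteDimensional K L₃ := Module.finite_of_finrank_pos (by omega)
    have : Finite L₃ := Module.finite_of_finite K
    rw [aux_N h2B (fun x => Polynomial.aeval x f)] at h3
    rw [aux_full (Ω := Ω) f 3 (by norm_num) hL₃] at h3
    change Odd (r 3 + _) at h3
    exact (Nat.odd_add.1 h3).2 (even_two_mul _)
  obtain ⟨hr2, hrm⟩ := aux_perm_s15 hR7 σ hσ r hr hr1 hr3
  intro m hm
  obtain ⟨k, rfl⟩ : ∃ k, m = k + 1 := ⟨m - 1, by omega⟩
  obtain ⟨c, hc⟩ := aux_main f hodd (h2A (L (k + 1))) k (hL _ hm)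
  rw [hfull _ _ (by positivity) (hL _ hm),
    aux_roots_s15 (Ω := Ω) f _ (by positivity) (hL _ hm) (2 ^ k) (pow_dvd_pow 2 (by omega))] at hc
  change _ = (r (2 ^ (k + 1)) : ℤ) + 2 - 2 * (r (2 ^ k) : ℤ) + _ at hc
  rw [← Int.natCast_modEq_iff]
  have hle : 2 ≤ 2 ^ (k + 1 + 1) := by
    have := Nat.one_le_two_pow (n := k + 1)
    rw [pow_succ]; omega
  rw [hc]
  push_cast [Nat.cast_sub hle]
  have key : (2 ^ (k + 2) : ℤ) ∣ r (2 ^ (k + 1)) + 4 - 2 * r (2 ^ k) := by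
    rcases k with _ | _ | k
    · obtain ⟨u, hu⟩ := hr1
      simp only [zero_add, pow_zero, pow_one]
      rcases hr2 with h | h <;> rw [h, hu] <;> push_cast <;> omega
    · have h4 := hrm 2 le_rfl
      simp only [zero_add, pow_one, Nat.reduceAdd]
      rw [h4]
      rcases hr2 with h | h <;> rw [h] <;> norm_num
    · rw [hrm (k + 1 + 1 + 1) (by omega), hrm (k + 1 + 1) (by omega)]
      norm_num
  obtain ⟨e, he⟩ := key
  rw [Int.modEq_iff_dvd]
  refine ⟨1 - c - e, ?_⟩
  rw [show k + 1 + 1 = k + 2 from rfl]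
  linear_combination -he
end

section
/- Let q be an odd prime power, let K be a finite field with q elements, let f ∈ K[X], let n = 2^a · m with m odd, and let L be a field extension of K with [L : K] = n. Then the number of elements x ∈ L such that f(x) ≠ 0 and f(x) is not a square in L is divisible by 2^a. -/
theorem square_of_involution_fixed {K L : Type*} [Field K] [Field L] [Algebra K L] [Finite L]
    [FiniteDimensional K L] (hodd : Odd (Nat.card L))
    (s : L ≃ₐ[K] L) (hs : orderOf s = 2) (c : L) (hc : s c = c) (h0 : c ≠ 0) :
    ∃ y : L, y ^ 2 = c := by
  classical
  have := Fintype.ofFinite L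
  let F := IntermediateField.fixedField (Subgroup.zpowers s)
  have hF : Module.finrank F L = 2 := by
    rw [IntermediateField.finrank_fixedField_eq_card, Nat.card_zpowers, hs]
  have hcF : c ∈ F := by
    rw [IntermediateField.mem_fixedField_iff]
    intro g hg
    have : Subgroup.zpowers s ≤ MulAction.stabilizer (L ≃ₐ[K] L) c := by
      rw [Subgroup.zpowers_le]
      exact hc
    exact this hg
  have hcard : Nat.card L = Nat.card F ^ 2 := by
    rw [← hF]; exact Module.natCard_eq_pow_finrank
  have := Fintype.ofFinite F
  have hpow : c ^ (Nat.card F) = c := by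
    have := FiniteField.pow_card (⟨c, hcF⟩ : F)
    rw [Nat.card_eq_fintype_card]
    exact congrArg Subtype.val this
  obtain ⟨k, hk⟩ : Odd (Nat.card F) := by
    rw [hcard] at hodd
    exact (Nat.odd_pow_iff (by norm_num)).1 hodd
  have h1 : c ^ (2 * k) = 1 := by
    rw [hk, pow_succ] at hpow
    exact mul_right_cancel₀ h0 (by rw [hpow, one_mul])
  have hch : ringChar L ≠ 2 := by
    intro h
    have := FiniteField.even_card_of_char_two h
    rw [← Nat.card_eq_fintype_card] at this
    have := Nat.odd_iff.1 hodd
    omega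
  have : IsSquare c := by
    rw [FiniteField.isSquare_iff hch h0, ← Nat.card_eq_fintype_card, hcard, hk]
    have : (2 * k + 1) ^ 2 / 2 = 2 * k * (k + 1) := by
      have : (2 * k + 1) ^ 2 = 2 * (2 * k * (k + 1)) + 1 := by ring
      omega
    rw [this, pow_mul, h1, one_pow]
  obtain ⟨y, hy⟩ := this
  exact ⟨y, by rw [hy, sq]⟩

/-- Let `q` be an odd prime power, `K` a finite field with `q` elements, `f ∈ K[X]`,
`n = 2^a ⬝ m` with `m` odd, and `L/K` an extension of degree `n`. Then the number of
`x ∈ L` such that `f(x) ≠ 0` and `f(x)` is not a square in `L` is divisible by `2^a`. -/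
theorem two_pow_dvd_card_nonsquare_values
    (q : ℕ) (hq : IsPrimePow q) (hqodd : Odd q)
    (K : Type*) [Field K] [Fintype K] (hK : Fintype.card K = q)
    (f : Polynomial K) (a m : ℕ) (hm : Odd m)
    (L : Type*) [Field L] [Algebra K L] (hL : Module.finrank K L = 2 ^ a * m) :
    2 ^ a ∣
      Nat.card {x : L // Polynomial.aeval x f ≠ 0 ∧ ¬∃ y : L, y ^ 2 = Polynomial.aeval x f} := by
  classical
  have hpos : 0 < Module.finrank K L := by
    rw [hL]; exact Nat.mul_pos (by positivity) hm.pos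
  have : FiniteDimensional K L := FiniteDimensional.of_finrank_pos hpos
  have : Finite L := Module.finite_of_finite K
  have hodd : Odd (Nat.card L) := by
    rw [Module.natCard_eq_pow_finrank (K := K), Nat.card_eq_fintype_card, hK]
    exact hqodd.pow
  have hG : Nat.card (L ≃ₐ[K] L) = 2 ^ a * m := by
    rw [IsGalois.card_aut_eq_finrank, hL]
  obtain ⟨H, hH⟩ := Sylow.exists_subgroup_card_pow_prime (G := L ≃ₐ[K] L) 2
    (n := a) (by rw [hG]; exact dvd_mul_right _ _)
  let S : SubMulAction H L :=
    { carrier := {x | Polynomial.aeval x f ≠ 0 ∧ ¬∃ y : L, y ^ 2 = Polynomial.aeval x f}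
      smul_mem' := by
        rintro ⟨g, hg⟩ x ⟨h0, hx⟩
        change Polynomial.aeval (g x) f ≠ 0 ∧ ¬∃ y : L, y ^ 2 = Polynomial.aeval (g x) f
        have e : Polynomial.aeval (g x) f = g (Polynomial.aeval x f) :=
          Polynomial.aeval_algHom_apply g x f
        rw [e]
        refine ⟨by simpa using h0, ?_⟩
        rintro ⟨y, hy⟩
        exact hx ⟨g.symm y, by rw [← map_pow, hy, AlgEquiv.symm_apply_apply]⟩ }
  have hfree : ∀ x : S, MulAction.stabilizer H x = ⊥ := by
    rintro ⟨x, h0, hx⟩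
    by_contra hne
    have hp : IsPGroup 2 (MulAction.stabilizer H (⟨x, h0, hx⟩ : S)) :=
      (IsPGroup.of_card hH).to_subgroup _
    have : Nontrivial (MulAction.stabilizer H (⟨x, h0, hx⟩ : S)) :=
      (Subgroup.nontrivial_iff_ne_bot _).2 hne
    obtain ⟨k, hk, hk'⟩ := hp.nontrivial_iff_card.1 this
    obtain ⟨s, hs⟩ := exists_prime_orderOf_dvd_card' 2
      (hk' ▸ dvd_pow_self 2 hk.ne')
    have hsx : (s.1.1 : L ≃ₐ[K] L) x = x := congrArg Subtype.val s.2
    apply hx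
    refine square_of_involution_fixed hodd (s.1.1) ?_ _ ?_ h0
    · rw [Subgroup.orderOf_coe, Subgroup.orderOf_coe, hs]
    · have e := Polynomial.aeval_algHom_apply (s.1.1 : L ≃ₐ[K] L) x f
      rw [← e, hsx]
  have e := MulAction.selfEquivOrbitsQuotientProd (G := H) (X := S) hfree
  have := Nat.card_congr e
  rw [Nat.card_prod, hH] at this
  exact ⟨_, this.trans (mul_comm _ _)⟩
end
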